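/- arXiv:2501.02942 — 10 statements merged into one kernel-verified Lean document; each statement's English description precedes it below -/
import Mathlib

section
/- For every integer m ≥ 1, every λ ∈ [0,1], and every T ≥ 0, the following identity holds: ∫₀^T e^{−t·m(1−λ)}·(1 + 2tmλ)^{−3/2} dt = E_{Z∼N(0,1)}[ Z²·(1 − e^{−T(m(1−λ)+mλZ²)})/(m(1−λ)+mλZ²) ], where Z is a standard Gaussian real random variable, and in the case λ = 1 the integrand on the right-hand side is the almost-surely finite quantity Z²(1 − e^{−TmZ²})/(mZ²). -/
open MeasureTheory ProbabilityTheory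

lemma gauss_sq (v : NNReal) : ∫ z, z ^ 2 ∂(gaussianReal 0 v) = v := by
  have h := variance_id_gaussianReal (μ := 0) (v := v)
  rw [variance_eq_integral (by fun_prop)] at h
  simpa using h

lemma gauss_mom (s : ℝ) (hs : 0 ≤ s) :
    ∫ z, z ^ 2 * Real.exp (-s * z ^ 2) ∂(gaussianReal 0 1) = (1 + 2 * s) ^ (-(3 / 2 : ℝ)) := by
  have hp : 0 < 1 + 2 * s := by linarith
  set v : NNReal := ⟨(1 + 2 * s)⁻¹, by positivity⟩ with hv
  have hvc : (v : ℝ) = (1 + 2 * s)⁻¹ := rfl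
  have hv0 : v ≠ 0 := by
    intro h
    have : (v : ℝ) = 0 := by rw [h]; rfl
    rw [hvc] at this
    exact (inv_pos.2 hp).ne' this
  have key : (1 + 2 * s) ^ (-(3 / 2 : ℝ)) = √(v : ℝ) * v := by
    rw [hvc, Real.sqrt_eq_rpow, Real.inv_rpow hp.le, ← Real.rpow_neg hp.le, ← Real.rpow_neg_one,
      ← Real.rpow_add hp]
    norm_num
  have g := gauss_sq v
  rw [integral_gaussianReal_eq_integral_smul hv0] at g
  have g2 := congrArg (fun y => √(v : ℝ) * y) g
  beta_reduce at g2
  rw [key, ← g2, integral_gaussianReal_eq_integral_smul one_ne_zero, ← integral_const_mul]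
  congr 1
  ext z
  simp only [gaussianPDFReal, smul_eq_mul, sub_zero, NNReal.coe_one, mul_one]
  have h1 : Real.exp (-z ^ 2 / (2 * v)) = Real.exp (-z ^ 2 / 2) * Real.exp (-s * z ^ 2) := by
    rw [← Real.exp_add, hvc]
    congr 1
    field_simp
    ring
  have hvp : 0 < √(v : ℝ) := Real.sqrt_pos.2 (by rw [hvc]; positivity)
  rw [h1, Real.sqrt_mul (by positivity) (v : ℝ)]
  field_simp

theorem stmt7 (m : ℕ) (hm : 1 ≤ m) (l : ℝ) (hl : l ∈ Set.Icc (0 : ℝ) 1)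
    (T : ℝ) (hT : 0 ≤ T) :
    (∫ t in (0 : ℝ)..T,
        Real.exp (-t * m * (1 - l)) * (1 + 2 * t * m * l) ^ (-(3 / 2 : ℝ)))
      = ∫ z, z ^ 2 * (1 - Real.exp (-T * (m * (1 - l) + m * l * z ^ 2)))
            / (m * (1 - l) + m * l * z ^ 2) ∂(gaussianReal 0 1) := by
  obtain ⟨hl0, hl1⟩ := hl
  have hm' : (0 : ℝ) < m := by exact_mod_cast hm
  have hl1' : 0 ≤ 1 - l := by linarith
  have hR : ∀ z : ℝ, z ^ 2 * (1 - Real.exp (-T * (m * (1 - l) + m * l * z ^ 2)))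
            / (m * (1 - l) + m * l * z ^ 2)
      = ∫ t in Set.Ioc 0 T, z ^ 2 * Real.exp (-t * (m * (1 - l) + m * l * z ^ 2)) := by
    intro z
    rw [← intervalIntegral.integral_of_le hT, intervalIntegral.integral_const_mul]
    by_cases hz : z = 0
    · simp [hz]
    have hc : 0 < m * (1 - l) + m * l * z ^ 2 := by
      have hz2 : 0 < z ^ 2 := by positivity
      rcases hl0.eq_or_lt with h | h
      · rw [← h]; simpa using hm'
      · have : 0 < m * l * z ^ 2 := by positivity
        have : 0 ≤ m * (1 - l) := by positivity
        linarith
    set c := m * (1 - l) + m * l * z ^ 2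
    have : ∫ t in (0 : ℝ)..T, Real.exp (-t * c) = (1 - Real.exp (-T * c)) / c := by
      have hd : ∀ t ∈ Set.uIcc 0 T,
          HasDerivAt (fun t => -Real.exp (-t * c) / c) (Real.exp (-t * c)) t := by
        intro t _
        have := ((((hasDerivAt_id t).neg).mul_const c).exp.neg).div_const c
        convert! this using 1
        change Real.exp (-t * c) = -(Real.exp (-t * c) * (-1 * c)) / c
        field_simp
      rw [intervalIntegral.integral_eq_sub_of_hasDerivAt hd
        (Continuous.intervalIntegrable (by fun_prop) _ _)]
      simp
      ring
    rw [this, mul_div_assoc]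
  simp_rw [hR]
  rw [integral_integral_swap, intervalIntegral.integral_of_le hT]
  · refine setIntegral_congr_fun measurableSet_Ioc fun t ht => ?_
    have ht0 : 0 ≤ t := ht.1.le
    have := gauss_mom (t * m * l) (by positivity)
    rw [show 1 + 2 * t * m * l = 1 + 2 * (t * m * l) by ring, ← this, ← integral_const_mul]
    congr 1
    ext z
    rw [mul_left_comm, ← Real.exp_add]
    congr 2
    ring
  · have h2 : Integrable (fun z : ℝ => z ^ 2) (gaussianReal 0 1) :=
      (memLp_id_gaussianReal (μ := 0) (v := 1) 2).integrable_sq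
    refine (h2.comp_fst (volume.restrict (Set.Ioc 0 T))).mono
      (Continuous.aestronglyMeasurable (by unfold Function.uncurry; fun_prop)) ?_
    have h3 : ∀ᵐ p : ℝ × ℝ ∂((gaussianReal 0 1).prod (volume.restrict (Set.Ioc 0 T))),
        p.2 ∈ Set.Ioc 0 T :=
      Measure.quasiMeasurePreserving_snd.ae (ae_restrict_mem measurableSet_Ioc)
    filter_upwards [h3] with p hp
    have hp0 : 0 ≤ p.2 := hp.1.le
    simp only [Function.uncurry, norm_mul]
    refine mul_le_of_le_one_right (norm_nonneg _) ?_
    rw [Real.norm_eq_abs, Real.abs_exp, Real.exp_le_one_iff]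
    have : 0 ≤ p.2 * (m * (1 - l) + m * l * p.1 ^ 2) := by positivity
    linarith
end

section
/- Let n ≥ m ≥ 1 and let A ∈ S^{nm}_+ be a real symmetric positive semidefinite matrix. Let μ be the Haar probability measure on the real orthogonal group O(n) ⊂ ℝ^{n×n}, and for g ∈ O(n) let Q(g) ∈ ℝ^{n×m} denote the matrix consisting of the first m columns of g (so Q(g)^⊤Q(g) = I_m). Then ∫_{O(n)} vec(Q(g))^⊤ A vec(Q(g)) dμ(g) ≤ sup{ vec(U)^⊤ A vec(U) : U ∈ ℝ^{n×m}, U^⊤U = I_m } ≤ nm · ∫_{O(n)} vec(Q(g))^⊤ A vec(Q(g)) dμ(g). -/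
open MeasureTheory Matrix

noncomputable instance {a b : Type*} : MeasurableSpace (Matrix a b ℝ) :=
  inferInstanceAs (MeasurableSpace (a → b → ℝ))

/-- `vec(U)`: stacking the columns of `U`, indexed by (column, row) pairs. -/
def vecM {n m : ℕ} (U : Matrix (Fin n) (Fin m) ℝ) : Fin m × Fin n → ℝ :=
  fun p => U p.2 p.1

/-- The first `m` columns of an `n × n` matrix (`m ≤ n`). -/
def firstCols {n m : ℕ} (hmn : m ≤ n) (g : Matrix (Fin n) (Fin n) ℝ) :
    Matrix (Fin n) (Fin m) ℝ :=
  Matrix.of fun p i => g p (Fin.castLE hmn i)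

abbrev OG (n : ℕ) := Matrix.orthogonalGroup (Fin n) ℝ

lemma meas_entry {n : ℕ} (p i : Fin n) :
    Measurable (fun g : OG n => (g : Matrix (Fin n) (Fin n) ℝ) p i) := by
  have h1 : Measurable (fun g : OG n => (g : Matrix (Fin n) (Fin n) ℝ)) := measurable_subtype_coe
  have h2 : Measurable (fun g : Matrix (Fin n) (Fin n) ℝ => g p i) :=
    (measurable_pi_apply (X := fun _ : Fin n => ℝ) i).comp
      (measurable_pi_apply (X := fun _ : Fin n => Fin n → ℝ) p)
  exact h2.comp h1

lemma col_orth {n : ℕ} (g : OG n) (i j : Fin n) :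
    ∑ p, (g : Matrix (Fin n) (Fin n) ℝ) p i * (g : Matrix (Fin n) (Fin n) ℝ) p j
      = if i = j then 1 else 0 := by
  have h := Matrix.mem_orthogonalGroup_iff' _ _ |>.1 g.2
  have h2 := congrFun (congrFun h i) j
  simpa [Matrix.mul_apply, Matrix.one_apply, Matrix.star_eq_conjTranspose] using h2

lemma entry_abs {n : ℕ} (g : OG n) (p i : Fin n) :
    |(g : Matrix (Fin n) (Fin n) ℝ) p i| ≤ 1 := by
  have h := col_orth g i i
  rw [if_pos rfl] at h
  rw [abs_le_one_iff_mul_self_le_one, ← h]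
  exact Finset.single_le_sum
    (f := fun p => (g : Matrix (Fin n) (Fin n) ℝ) p i * (g : Matrix (Fin n) (Fin n) ℝ) p i)
    (fun q _ => mul_self_nonneg _) (Finset.mem_univ p)

lemma int_entry {n : ℕ} (μ : Measure (OG n)) [IsProbabilityMeasure μ] (p q i j : Fin n) :
    Integrable (fun g : OG n => (g : Matrix (Fin n) (Fin n) ℝ) p i *
      (g : Matrix (Fin n) (Fin n) ℝ) q j) μ := by
  refine Integrable.of_bound ((meas_entry p i).mul (meas_entry q j)).aestronglyMeasurable 1 ?_
  filter_upwards with g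
  rw [Real.norm_eq_abs, abs_mul]
  exact mul_le_one₀ (entry_abs g p i) (abs_nonneg _) (entry_abs g q j)

lemma inv_entry {n : ℕ} (μ : Measure (OG n)) [IsProbabilityMeasure μ]
    (hinv : ∀ h : OG n, Measure.map (fun g => h * g) μ = μ) (h : OG n) (p q i j : Fin n) :
    ∫ g : OG n, (g : Matrix (Fin n) (Fin n) ℝ) p i * (g : Matrix (Fin n) (Fin n) ℝ) q j ∂μ =
    ∫ g : OG n, ((h : Matrix (Fin n) (Fin n) ℝ) * (g : Matrix (Fin n) (Fin n) ℝ)) p i *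
      ((h : Matrix (Fin n) (Fin n) ℝ) * (g : Matrix (Fin n) (Fin n) ℝ)) q j ∂μ := by
  have hae : AEMeasurable (fun g => h * g) μ := by
    by_contra hc
    have h1 := hinv h
    rw [Measure.map_of_not_aemeasurable hc] at h1
    exact IsProbabilityMeasure.ne_zero μ h1.symm
  conv_lhs => rw [← hinv h]
  exact integral_map hae ((meas_entry p i).mul (meas_entry q j)).aestronglyMeasurable

lemma E_off {n : ℕ} (μ : Measure (OG n)) [IsProbabilityMeasure μ]
    (hinv : ∀ h : OG n, Measure.map (fun g => h * g) μ = μ) (p q i j : Fin n) (hpq : p ≠ q) :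
    ∫ g : OG n, (g : Matrix (Fin n) (Fin n) ℝ) p i * (g : Matrix (Fin n) (Fin n) ℝ) q j ∂μ
      = 0 := by
  have hm : Matrix.diagonal (fun k : Fin n => if k = p then (-1 : ℝ) else 1) ∈
      Matrix.orthogonalGroup (Fin n) ℝ := by
    rw [Matrix.mem_orthogonalGroup_iff, Matrix.diagonal_transpose, Matrix.diagonal_mul_diagonal, ← Matrix.diagonal_one]
    congr 1
    ext k
    by_cases hk : k = p <;> simp [hk]
  have h := inv_entry μ hinv ⟨_, hm⟩ p q i j
  simp only [Matrix.diagonal_mul, if_true, if_neg hpq.symm, one_mul, neg_mul, integral_neg] at h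
  linarith

lemma E_swap {n : ℕ} (μ : Measure (OG n)) [IsProbabilityMeasure μ]
    (hinv : ∀ h : OG n, Measure.map (fun g => h * g) μ = μ) (p q i j : Fin n) :
    ∫ g : OG n, (g : Matrix (Fin n) (Fin n) ℝ) p i * (g : Matrix (Fin n) (Fin n) ℝ) p j ∂μ =
    ∫ g : OG n, (g : Matrix (Fin n) (Fin n) ℝ) q i * (g : Matrix (Fin n) (Fin n) ℝ) q j ∂μ := by
  have hm : (Equiv.swap p q).toPEquiv.toMatrix ∈ Matrix.orthogonalGroup (Fin n) ℝ := by
    rw [Matrix.mem_orthogonalGroup_iff, ← PEquiv.toMatrix_symm,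
      ← PEquiv.toMatrix_trans, ← Equiv.toPEquiv_symm, ← Equiv.toPEquiv_trans]
    simp
  have h := inv_entry μ hinv ⟨_, hm⟩ p p i j
  simpa [PEquiv.toMatrix_toPEquiv_mul] using h

lemma E_diag {n : ℕ} (μ : Measure (OG n)) [IsProbabilityMeasure μ]
    (hinv : ∀ h : OG n, Measure.map (fun g => h * g) μ = μ) (p i j : Fin n) :
    n * ∫ g : OG n, (g : Matrix (Fin n) (Fin n) ℝ) p i * (g : Matrix (Fin n) (Fin n) ℝ) p j ∂μ
      = if i = j then 1 else 0 := by
  have h : ∑ q : Fin n, ∫ g : OG n, (g : Matrix (Fin n) (Fin n) ℝ) q i *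
      (g : Matrix (Fin n) (Fin n) ℝ) q j ∂μ = if i = j then 1 else 0 := by
    rw [← integral_finsetSum _ (fun q _ => int_entry μ q q i j)]
    simp_rw [col_orth]
    simp
  rw [← h, Finset.sum_congr rfl (fun q _ => E_swap μ hinv q p i j)]
  simp

lemma quad_bound {ι : Type*} [Fintype ι] [DecidableEq ι] (A : Matrix ι ι ℝ)
    (hA : A.PosSemidef) (u : ι → ℝ) : u ⬝ᵥ A.mulVec u ≤ A.trace * (u ⬝ᵥ u) := by
  obtain ⟨B, rfl⟩ : ∃ B : Matrix ι ι ℝ, A = Bᴴ * B := by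
    open scoped MatrixOrder in
    exact (CStarAlgebra.nonneg_iff_eq_star_mul_self (a := A)).1 hA.nonneg
  rw [Matrix.conjTranspose_eq_transpose_of_trivial, ← Matrix.mulVec_mulVec,
    Matrix.dotProduct_mulVec, Matrix.vecMul_transpose, Matrix.trace_mul_comm]
  simp only [Matrix.trace, Matrix.diag, Matrix.mul_apply, Matrix.transpose_apply, dotProduct,
    Matrix.mulVec, Finset.sum_mul _ _ (∑ i, u i * u i)]
  refine Finset.sum_le_sum fun k _ => ?_
  have := Finset.sum_mul_sq_le_sq_mul_sq Finset.univ (fun p => B k p) u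
  simpa [pow_two, Finset.sum_mul _ _ (∑ i, u i * u i)] using this

lemma norm_vec {n m : ℕ} (U : Matrix (Fin n) (Fin m) ℝ) (hU : Uᵀ * U = 1) :
    vecM U ⬝ᵥ vecM U = m := by
  have h : (Uᵀ * U).trace = m := by rw [hU]; simp
  rw [← h]
  simp [dotProduct, vecM, Matrix.trace, Matrix.mul_apply, Fintype.sum_prod_type]

lemma firstCols_orth {n m : ℕ} (hmn : m ≤ n) (g : OG n) :
    (firstCols hmn (g : Matrix (Fin n) (Fin n) ℝ))ᵀ *
      firstCols hmn (g : Matrix (Fin n) (Fin n) ℝ) = 1 := by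
  ext i j
  simp only [Matrix.mul_apply, Matrix.transpose_apply, firstCols, Matrix.of_apply, col_orth,
    Matrix.one_apply, Fin.castLE_inj]

lemma quad_expand {n m : ℕ} (hmn : m ≤ n) (A : Matrix (Fin m × Fin n) (Fin m × Fin n) ℝ)
    (g : Matrix (Fin n) (Fin n) ℝ) :
    vecM (firstCols hmn g) ⬝ᵥ A.mulVec (vecM (firstCols hmn g)) =
    ∑ a, ∑ b, A a b * (g a.2 (Fin.castLE hmn a.1) * g b.2 (Fin.castLE hmn b.1)) := by
  simp only [dotProduct, Matrix.mulVec, vecM, firstCols, Matrix.of_apply, Finset.mul_sum]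
  refine Finset.sum_congr rfl fun a _ => Finset.sum_congr rfl fun b _ => by ring

lemma quad_int {n m : ℕ} (hmn : m ≤ n) (A : Matrix (Fin m × Fin n) (Fin m × Fin n) ℝ)
    (μ : Measure (OG n)) [IsProbabilityMeasure μ] :
    Integrable (fun g : OG n => vecM (firstCols hmn (g : Matrix (Fin n) (Fin n) ℝ))
        ⬝ᵥ A.mulVec (vecM (firstCols hmn (g : Matrix (Fin n) (Fin n) ℝ)))) μ := by
  simp_rw [quad_expand]
  exact integrable_finsetSum _ fun a _ => integrable_finsetSum _ fun b _ =>
    (int_entry μ _ _ _ _).const_mul _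

lemma quad_integral {n m : ℕ} (hmn : m ≤ n) (A : Matrix (Fin m × Fin n) (Fin m × Fin n) ℝ)
    (μ : Measure (OG n)) [IsProbabilityMeasure μ]
    (hinv : ∀ h : OG n, Measure.map (fun g => h * g) μ = μ) :
    n * ∫ g : OG n, vecM (firstCols hmn (g : Matrix (Fin n) (Fin n) ℝ))
        ⬝ᵥ A.mulVec (vecM (firstCols hmn (g : Matrix (Fin n) (Fin n) ℝ))) ∂μ = A.trace := by
  simp_rw [quad_expand]
  rw [integral_finsetSum Finset.univ (fun a _ => integrable_finsetSum Finset.univ fun b _ =>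
    (int_entry μ a.2 b.2 (Fin.castLE hmn a.1) (Fin.castLE hmn b.1)).const_mul (A a b)),
    Finset.mul_sum]
  refine Finset.sum_congr rfl fun a _ => ?_
  rw [integral_finsetSum Finset.univ (fun b _ =>
    (int_entry μ a.2 b.2 (Fin.castLE hmn a.1) (Fin.castLE hmn b.1)).const_mul (A a b)),
    Finset.mul_sum,
    Finset.sum_eq_single a]
  · rw [integral_const_mul, mul_left_comm, E_diag μ hinv]
    simp
  · rintro b - hb
    rw [integral_const_mul]
    by_cases h2 : a.2 = b.2
    · rw [← h2, mul_left_comm, E_diag μ hinv, if_neg, mul_zero]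
      intro h1
      exact hb (Prod.ext ((Fin.castLE_injective hmn h1).symm) h2.symm)
    · rw [E_off μ hinv _ _ _ _ h2]; simp
  · simp

/-- Proposition 2.2, uniform/Haar sampling bound.
For `A ⪰ 0` and `μ` the Haar probability measure on `O(n)` (formalized as a
left-translation-invariant probability measure), with `Q(g)` the first `m`
columns of `g`:
`∫ vec(Q(g))ᵀ A vec(Q(g)) dμ ≤ sup {vec(U)ᵀ A vec(U) : UᵀU = Iₘ}
  ≤ nm ∫ vec(Q(g))ᵀ A vec(Q(g)) dμ`. -/
theorem stmt10 {n m : ℕ} (hm : 1 ≤ m) (hmn : m ≤ n)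
    (A : Matrix (Fin m × Fin n) (Fin m × Fin n) ℝ) (hA : A.PosSemidef)
    (μ : Measure (Matrix.orthogonalGroup (Fin n) ℝ)) [IsProbabilityMeasure μ]
    (hinv : ∀ h : Matrix.orthogonalGroup (Fin n) ℝ,
      Measure.map (fun g => h * g) μ = μ) :
    (∫ g, vecM (firstCols hmn (g : Matrix (Fin n) (Fin n) ℝ))
        ⬝ᵥ A.mulVec (vecM (firstCols hmn (g : Matrix (Fin n) (Fin n) ℝ))) ∂μ)
      ≤ sSup {x : ℝ | ∃ U : Matrix (Fin n) (Fin m) ℝ,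
          Uᵀ * U = 1 ∧ x = vecM U ⬝ᵥ A.mulVec (vecM U)} ∧
    sSup {x : ℝ | ∃ U : Matrix (Fin n) (Fin m) ℝ,
          Uᵀ * U = 1 ∧ x = vecM U ⬝ᵥ A.mulVec (vecM U)}
      ≤ (n : ℝ) * m
          * ∫ g, vecM (firstCols hmn (g : Matrix (Fin n) (Fin n) ℝ))
              ⬝ᵥ A.mulVec (vecM (firstCols hmn (g : Matrix (Fin n) (Fin n) ℝ))) ∂μ := by
  have hub : ∀ x ∈ {x : ℝ | ∃ U : Matrix (Fin n) (Fin m) ℝ,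
          Uᵀ * U = 1 ∧ x = vecM U ⬝ᵥ A.mulVec (vecM U)}, x ≤ A.trace * m := by
    rintro x ⟨U, hU, rfl⟩
    have := quad_bound A hA (vecM U)
    rwa [norm_vec U hU] at this
  constructor
  · have h := integral_mono (quad_int hmn A μ) (integrable_const (sSup {x : ℝ |
        ∃ U : Matrix (Fin n) (Fin m) ℝ, Uᵀ * U = 1 ∧ x = vecM U ⬝ᵥ A.mulVec (vecM U)}))
      (fun g => le_csSup ⟨_, hub⟩ ⟨_, firstCols_orth hmn g, rfl⟩)
    simpa using h
  · rw [mul_right_comm, quad_integral hmn A μ hinv]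
    refine csSup_le ?_ hub
    exact ⟨_, _, firstCols_orth hmn 1, rfl⟩
end

section
/- Let n, m ≥ 1, let Ω ⊆ [n]×[m], and let A ∈ ℝ^{n×m}. Consider two optimization problems with objective tr(Y). Problem (I): minimize tr(Y) over Y ∈ S^n with 0 ⪯ Y ⪯ I_n, X ∈ ℝ^{n×m}, and W ∈ S^{nm}_+ whose coordinates are indexed by pairs (i,j) ∈ [n]×[m] with m×m blocks W^{(i,k)} given by (W^{(i,k)})_{j,ℓ} = W_{(i,j),(k,ℓ)}, subject to: A_{i,j}A_{k,ℓ} − A_{k,ℓ}X_{i,j} − A_{i,j}X_{k,ℓ} + (W^{(i,k)})_{j,ℓ} = 0 for all (i,j),(k,ℓ) ∈ Ω×Ω; X_{i,j} = A_{i,j} for all (i,j) ∈ Ω; W ⪰ vec(X^⊤)vec(X^⊤)^⊤; and the block matrix [[Σ_{i∈[n]} W^{(i,i)}, X^⊤],[X, Y]] ⪰ 0. Problem (II): minimize tr(Y) over Y ∈ S^n with 0 ⪯ Y ⪯ I_n, X ∈ ℝ^{n×m}, and S^1,…,S^n ∈ S^m_+, subject to: A_{i,j}A_{i,ℓ} −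 A_{i,ℓ}X_{i,j} − A_{i,j}X_{i,ℓ} + (S^i)_{j,ℓ} = 0 for all (i,j),(i,ℓ) ∈ Ω×Ω; X_{i,j} = A_{i,j} for all (i,j) ∈ Ω; S^i ⪰ X_{i,·}X_{i,·}^⊤ for every i ∈ [n]; and [[Σ_{i∈[n]} S^i, X^⊤],[X, Y]] ⪰ 0, where X_{i,·} ∈ ℝ^m denotes the i-th row of X as a column vector. Then the optimal values (infima) of Problems (I) and (II) are equal. -/
open Matrix

lemma blockDiag_psd {n m : ℕ} (T : Fin n → Matrix (Fin m) (Fin m) ℝ)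
    (h : ∀ i, (T i).PosSemidef) : (Matrix.blockDiagonal T).PosSemidef := by
  refine Matrix.PosSemidef.of_dotProduct_mulVec_nonneg ?_ ?_
  · rw [Matrix.IsHermitian, Matrix.blockDiagonal_conjTranspose]
    congr 1
    ext1 i
    exact (h i).1
  · intro x
    have key : star x ⬝ᵥ (Matrix.blockDiagonal T *ᵥ x) =
        ∑ i, (star (fun j => x (j, i)) ⬝ᵥ (T i *ᵥ (fun j => x (j, i)))) := by
      simp only [dotProduct, mulVec, Fintype.sum_prod_type, Matrix.blockDiagonal_apply]
      rw [Finset.sum_comm]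
      simp
    rw [key]
    exact Finset.sum_nonneg fun i _ => (h i).dotProduct_mulVec_nonneg _

/-- Proposition EC.4, low-rank basis pursuit:
equivalence of the full and the compact Shor relaxations. -/
theorem stmt11 {n m : ℕ} (hn : 1 ≤ n) (hm : 1 ≤ m)
    (Obs : Set (Fin n × Fin m)) (A : Matrix (Fin n) (Fin m) ℝ) :
    sInf {x : EReal | ∃ (Y : Matrix (Fin n) (Fin n) ℝ)
        (X : Matrix (Fin n) (Fin m) ℝ)
        (W : Matrix (Fin n × Fin m) (Fin n × Fin m) ℝ),
        Y.PosSemidef ∧ ((1 : Matrix (Fin n) (Fin n) ℝ) - Y).PosSemidef ∧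
        W.PosSemidef ∧
        (∀ i j k l, (i, j) ∈ Obs → (k, l) ∈ Obs →
          A i j * A k l - A k l * X i j - A i j * X k l + W (i, j) (k, l) = 0) ∧
        (∀ i j, (i, j) ∈ Obs → X i j = A i j) ∧
        (W - Matrix.vecMulVec (fun p : Fin n × Fin m => X p.1 p.2)
              (fun p : Fin n × Fin m => X p.1 p.2)).PosSemidef ∧
        (Matrix.fromBlocks
            (Matrix.of fun j l : Fin m => ∑ i : Fin n, W (i, j) (i, l))
            Xᵀ X Y).PosSemidef ∧
        x = (Y.trace : ℝ)} =
      sInf {x : EReal | ∃ (Y : Matrix (Fin n) (Fin n) ℝ)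
        (X : Matrix (Fin n) (Fin m) ℝ)
        (S : Fin n → Matrix (Fin m) (Fin m) ℝ),
        Y.PosSemidef ∧ ((1 : Matrix (Fin n) (Fin n) ℝ) - Y).PosSemidef ∧
        (∀ i, (S i).PosSemidef) ∧
        (∀ i j l, (i, j) ∈ Obs → (i, l) ∈ Obs →
          A i j * A i l - A i l * X i j - A i j * X i l + S i j l = 0) ∧
        (∀ i j, (i, j) ∈ Obs → X i j = A i j) ∧
        (∀ i, (S i - Matrix.vecMulVec (fun j => X i j)
              (fun j => X i j)).PosSemidef) ∧
        (Matrix.fromBlocks (∑ i, S i) Xᵀ X Y).PosSemidef ∧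
        x = (Y.trace : ℝ)} := by
  congr 1
  ext x
  constructor
  · rintro ⟨Y, X, W, h1, h2, h3, h4, h5, h6, h7, h8⟩
    refine ⟨Y, X, fun i => W.submatrix (fun j => (i, j)) (fun j => (i, j)), h1, h2,
      fun i => h3.submatrix _, fun i j l hj hl => h4 i j i l hj hl, h5,
      fun i => h6.submatrix (fun j => (i, j)), ?_, h8⟩
    convert h7 using 2
    ext j l
    simp [Matrix.sum_apply]
  · rintro ⟨Y, X, S, h1, h2, h3, h4, h5, h6, h7, h8⟩
    have hv : (Matrix.vecMulVec (fun p : Fin n × Fin m => X p.1 p.2)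
              (fun p : Fin n × Fin m => X p.1 p.2)).PosSemidef := by
      simpa using Matrix.posSemidef_vecMulVec_self_star (fun p : Fin n × Fin m => X p.1 p.2)
    have hB := (blockDiag_psd _ h6)
    refine ⟨Y, X, Matrix.vecMulVec (fun p : Fin n × Fin m => X p.1 p.2)
              (fun p : Fin n × Fin m => X p.1 p.2) +
        (Matrix.blockDiagonal fun i => S i - Matrix.vecMulVec (fun j => X i j)
              (fun j => X i j)).submatrix Prod.swap Prod.swap, h1, h2,
      hv.add (hB.submatrix _), ?_, h5, ?_, ?_, h8⟩
    · intro i j k l hj hl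
      have e1 := h5 _ _ hj
      have e2 := h5 _ _ hl
      by_cases hik : i = k
      · subst hik
        have := h4 i j l hj hl
        simp [Matrix.blockDiagonal_apply, Matrix.vecMulVec_apply]
        linarith
      · simp [Matrix.blockDiagonal_apply, Matrix.vecMulVec_apply, hik, e1, e2]
        ring
    · rw [add_sub_cancel_left]
      exact hB.submatrix _
    · convert h7 using 2
      ext j l
      simp [Matrix.sum_apply, Matrix.blockDiagonal_apply, Matrix.vecMulVec_apply]
end

section
/- Let n, m ≥ 1, k ∈ ℕ, C ∈ S^n_+, H ∈ S^{nm}_+, D ∈ ℝ^{n×m}, and let (A_i, b_i)_{i∈I} be a finite family with A_i ∈ ℝ^{n×m}, b_i ∈ ℝ. Define v* as the infimum of ⟨C,Y⟩ + vec(X^⊤)^⊤ H vec(X^⊤) + ⟨D,X⟩ over pairs (X,Y) with Y ∈ S^n, Y² = Y, tr(Y) ≤ k, X ∈ ℝ^{n×m}, ⟨A_i,X⟩ ≤ b_i for all i ∈ I, and X = YX. Define v_rel as the infimum of ⟨C,Y⟩ + ⟨W_xx, H⟩ + ⟨D,X⟩ over tuples (Y, X, W_xx, W_xy, W_yy) with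 Y ∈ S^n_+, Y ⪯ I_n, tr(Y) ≤ k; X ∈ ℝ^{n×m} with ⟨A_i,X⟩ ≤ b_i for all i; W_xx ∈ S^{nm}, W_yy ∈ S^{n²}, W_xy ∈ ℝ^{nm×n²}; the bordered block matrix [[1, vec(X^⊤)^⊤, vec(Y)^⊤],[vec(X^⊤), W_xx, W_xy],[vec(Y), W_xy^⊤, W_yy]] ⪰ 0; Σ_{i∈[n]} W_yy^{(i,i)} = Y; and Σ_{i∈[n]} W_xy^{(i,i)} = X^⊤. Then v_rel ≤ v*; more precisely, for every feasible (X,Y) of the first problem, setting W_xx = vec(X^⊤)vec(X^⊤)^⊤, W_xy = vec(X^⊤)vec(Y)^⊤, W_yy = vec(Y)vec(Y)^⊤ yields a feasible point of the second problem with the same objective value. -/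
open Matrix

/-- Frobenius inner product `⟨A,B⟩ = tr(AᵀB)`. -/
def frob {a b : Type*} [Fintype a] [Fintype b] (A B : Matrix a b ℝ) : ℝ :=
  (Aᵀ * B).trace

/-- `vec(Xᵀ)`: stacking the rows of `X`, indexed by (row, column) pairs. -/
def vecXt {n m : ℕ} (X : Matrix (Fin n) (Fin m) ℝ) : Fin n × Fin m → ℝ :=
  fun p => X p.1 p.2

/-- `vec(Y)`: stacking the columns of `Y`, indexed by (column, row) pairs. -/
def vecY {n : ℕ} (Y : Matrix (Fin n) (Fin n) ℝ) : Fin n × Fin n → ℝ :=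
  fun p => Y p.2 p.1

/-- The bordered matrix `[[1, vec(Xᵀ)ᵀ, vec(Y)ᵀ], [vec(Xᵀ), Wxx, Wxy], [vec(Y), Wxyᵀ, Wyy]]`. -/
def bordered {n m : ℕ} (X : Matrix (Fin n) (Fin m) ℝ) (Y : Matrix (Fin n) (Fin n) ℝ)
    (Wxx : Matrix (Fin n × Fin m) (Fin n × Fin m) ℝ)
    (Wxy : Matrix (Fin n × Fin m) (Fin n × Fin n) ℝ)
    (Wyy : Matrix (Fin n × Fin n) (Fin n × Fin n) ℝ) :
    Matrix (Unit ⊕ ((Fin n × Fin m) ⊕ (Fin n × Fin n)))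
      (Unit ⊕ ((Fin n × Fin m) ⊕ (Fin n × Fin n))) ℝ :=
  Matrix.fromBlocks
    (Matrix.of fun _ _ : Unit => (1 : ℝ))
    (Matrix.of fun (_ : Unit) q => Sum.elim (vecXt X) (vecY Y) q)
    (Matrix.of fun q (_ : Unit) => Sum.elim (vecXt X) (vecY Y) q)
    (Matrix.fromBlocks Wxx Wxy Wxyᵀ Wyy)

/-- Feasibility for the exact rank-constrained problem (3.1). -/
def FeasExact {n m : ℕ} (k : ℕ) {ι : Type*}
    (A : ι → Matrix (Fin n) (Fin m) ℝ) (b : ι → ℝ)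
    (X : Matrix (Fin n) (Fin m) ℝ) (Y : Matrix (Fin n) (Fin n) ℝ) : Prop :=
  Y.IsSymm ∧ Y * Y = Y ∧ Y.trace ≤ (k : ℝ) ∧
    (∀ i, frob (A i) X ≤ b i) ∧ X = Y * X

/-- Feasibility for the Shor relaxation (3.2). -/
def FeasRel {n m : ℕ} (k : ℕ) {ι : Type*}
    (A : ι → Matrix (Fin n) (Fin m) ℝ) (b : ι → ℝ)
    (Y : Matrix (Fin n) (Fin n) ℝ) (X : Matrix (Fin n) (Fin m) ℝ)
    (Wxx : Matrix (Fin n × Fin m) (Fin n × Fin m) ℝ)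
    (Wxy : Matrix (Fin n × Fin m) (Fin n × Fin n) ℝ)
    (Wyy : Matrix (Fin n × Fin n) (Fin n × Fin n) ℝ) : Prop :=
  Y.PosSemidef ∧ ((1 : Matrix (Fin n) (Fin n) ℝ) - Y).PosSemidef ∧
    Y.trace ≤ (k : ℝ) ∧ (∀ i, frob (A i) X ≤ b i) ∧
    Wxx.IsSymm ∧ Wyy.IsSymm ∧
    (bordered X Y Wxx Wxy Wyy).PosSemidef ∧
    (∀ p q : Fin n, (∑ i : Fin n, Wyy (i, p) (i, q)) = Y p q) ∧
    (∀ (j : Fin m) (q : Fin n), (∑ i : Fin n, Wxy (i, j) (i, q)) = X q j)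

/-- Proposition 3.1.
The Shor relaxation value `v_rel` is at most the exact value `v*`; more
precisely, every feasible `(X,Y)` of the exact problem lifts, via rank-one
outer products, to a feasible point of the relaxation with the same objective
value. -/
theorem stmt13 {n m : ℕ} (hn : 1 ≤ n) (hm : 1 ≤ m) (k : ℕ)
    (C : Matrix (Fin n) (Fin n) ℝ) (hC : C.PosSemidef)
    (H : Matrix (Fin n × Fin m) (Fin n × Fin m) ℝ) (hH : H.PosSemidef)
    (D : Matrix (Fin n) (Fin m) ℝ)
    {ι : Type*} [Fintype ι] (A : ι → Matrix (Fin n) (Fin m) ℝ) (b : ι → ℝ) :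
    (sInf {x : EReal | ∃ Y X Wxx Wxy Wyy, FeasRel k A b Y X Wxx Wxy Wyy ∧
        x = ((frob C Y + frob Wxx H + frob D X : ℝ) : EReal)}
      ≤ sInf {x : EReal | ∃ X Y, FeasExact k A b X Y ∧
        x = ((frob C Y + vecXt X ⬝ᵥ H.mulVec (vecXt X) + frob D X : ℝ) : EReal)}) ∧
    (∀ X Y, FeasExact k A b X Y →
      FeasRel k A b Y X
        (Matrix.vecMulVec (vecXt X) (vecXt X))
        (Matrix.vecMulVec (vecXt X) (vecY Y))
        (Matrix.vecMulVec (vecY Y) (vecY Y)) ∧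
      frob C Y + frob (Matrix.vecMulVec (vecXt X) (vecXt X)) H + frob D X
        = frob C Y + vecXt X ⬝ᵥ H.mulVec (vecXt X) + frob D X) := by
  have key : ∀ X Y, FeasExact k A b X Y →
      FeasRel k A b Y X
        (Matrix.vecMulVec (vecXt X) (vecXt X))
        (Matrix.vecMulVec (vecXt X) (vecY Y))
        (Matrix.vecMulVec (vecY Y) (vecY Y)) ∧
      frob C Y + frob (Matrix.vecMulVec (vecXt X) (vecXt X)) H + frob D X
        = frob C Y + vecXt X ⬝ᵥ H.mulVec (vecXt X) + frob D X := by
    rintro X Y ⟨hs, hYY, htr, hA, hX⟩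
    have hs' : Yᵀ = Y := hs
    refine ⟨⟨?_, ?_, htr, hA, ?_, ?_, ?_, ?_, ?_⟩, ?_⟩
    · have h := Matrix.posSemidef_conjTranspose_mul_self Y
      rwa [Matrix.conjTranspose_eq_transpose_of_trivial, hs', hYY] at h
    · have h := Matrix.posSemidef_conjTranspose_mul_self (1 - Y)
      rw [Matrix.conjTranspose_eq_transpose_of_trivial, Matrix.transpose_sub,
        Matrix.transpose_one, hs'] at h
      have e : (1 - Y) * (1 - Y) = 1 - Y := by
        rw [Matrix.sub_mul, Matrix.mul_sub, Matrix.mul_sub, hYY]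
        simp
      rwa [e] at h
    · ext p q
      simp [Matrix.vecMulVec_apply, mul_comm]
    · ext p q
      simp [Matrix.vecMulVec_apply, mul_comm]
    · have h := Matrix.posSemidef_vecMulVec_self_star
        (Sum.elim (fun _ : Unit => (1 : ℝ)) (Sum.elim (vecXt X) (vecY Y)))
      convert h using 1
      ext p q
      rcases p with p | p | p <;> rcases q with q | q | q <;>
        simp [bordered, Matrix.vecMulVec_apply, mul_comm]
    · intro p q
      have h : (Y * Yᵀ) p q = Y p q := by rw [hs', hYY]
      rw [← h, Matrix.mul_apply]
      rfl
    · intro j q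
      have h : (Y * X) q j = X q j := by rw [← hX]
      rw [← h, Matrix.mul_apply]
      exact Finset.sum_congr rfl fun i _ => mul_comm _ _
    · congr 2
      rw [frob, Matrix.transpose_vecMulVec, Matrix.vecMulVec_mul, Matrix.trace_vecMulVec,
        Matrix.dotProduct_mulVec, dotProduct_comm]
  refine ⟨?_, key⟩
  apply sInf_le_sInf
  rintro x ⟨X, Y, hf, rfl⟩
  exact ⟨Y, X, _, _, _, (key X Y hf).1, by rw [(key X Y hf).2]⟩
end

section
/- Let n, m ≥ 1, k ∈ ℕ, C ∈ S^n_+, H ∈ S^{nm}_+, D ∈ ℝ^{n×m}, and let (A_i, b_i)_{i∈I} be a finite family with A_i ∈ ℝ^{n×m}, b_i ∈ ℝ. Define v_full as the infimum of ⟨C,Y⟩ + ⟨W_xx, H⟩ + ⟨D,X⟩ over tuples (Y, X, W_xx, W_xy, W_yy) with Y ∈ S^n_+, Y ⪯ I_n, tr(Y) ≤ k; X ∈ ℝ^{n×m} with ⟨A_i,X⟩ ≤ b_i for all i ∈ I; W_xx ∈ S^{nm}, W_yy ∈ S^{n²}, W_xy ∈ ℝ^{nm×n²}; [[1, vec(X^⊤)^⊤,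 vec(Y)^⊤],[vec(X^⊤), W_xx, W_xy],[vec(Y), W_xy^⊤, W_yy]] ⪰ 0; Σ_{i∈[n]} W_yy^{(i,i)} = Y; Σ_{i∈[n]} W_xy^{(i,i)} = X^⊤. Define v_compact as the infimum of ⟨C,Y⟩ + ⟨W_xx, H⟩ + ⟨D,X⟩ over tuples (Y, X, W_xx) with Y ∈ S^n_+, Y ⪯ I_n, tr(Y) ≤ k; X ∈ ℝ^{n×m} with ⟨A_i,X⟩ ≤ b_i for all i; W_xx ∈ S^{nm}_+ with W_xx ⪰ vec(X^⊤)vec(X^⊤)^⊤; and [[Σ_{i∈[n]} W_xx^{(i,i)}, X^⊤],[X, Y]] ⪰ 0, where W_xx^{(i,i)} ∈ ℝ^{m×m} are the diagonal m×m blocks of W_xx. Then v_full = v_compact. -/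
open Matrix

/-- normal equations -/
theorem hx_normal {a c d : Type*} [Fintype a] [Fintype c] [Fintype d]
    (P : Matrix c a ℝ) (Q : Matrix c d ℝ) : ∃ Z : Matrix a d ℝ, Pᵀ * P * Z = Pᵀ * Q := by
  classical
  have hr : LinearMap.range (Pᵀ * P).mulVecLin = LinearMap.range Pᵀ.mulVecLin := by
    apply Submodule.eq_of_le_of_finrank_eq
    · rintro _ ⟨v, rfl⟩
      exact ⟨P *ᵥ v, by simp⟩
    · have h1 := Matrix.rank_transpose_mul_self P
      have h2 := Matrix.rank_transpose P
      unfold Matrix.rank at h1 h2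
      rw [h1, h2]
  have : ∀ j : d, ∃ z : a → ℝ, (Pᵀ * P) *ᵥ z = Pᵀ *ᵥ (fun i => Q i j) := by
    intro j
    have : Pᵀ *ᵥ (fun i => Q i j) ∈ LinearMap.range (Pᵀ * P).mulVecLin := by
      rw [hr]; exact ⟨_, rfl⟩
    obtain ⟨z, hz⟩ := this
    exact ⟨z, hz⟩
  choose z hz using this
  refine ⟨Matrix.of fun i j => z j i, ?_⟩
  ext i j
  exact congrFun (hz j) i

open scoped MatrixOrder in
theorem hx_gram {a : Type*} [Fintype a] [DecidableEq a] (M : Matrix a a ℝ) (h : M.PosSemidef) :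
    ∃ N : Matrix a a ℝ, M = Nᵀ * N := by
  obtain ⟨B, hB⟩ := CStarAlgebra.nonneg_iff_eq_star_mul_self.mp h.nonneg
  exact ⟨B, by rw [hB]; simp [Matrix.star_eq_conjTranspose]⟩

theorem hx_schur {a d : Type*} [Fintype a] [Fintype d] (S : Matrix a a ℝ) (B : Matrix d a ℝ)
    (T : Matrix d d ℝ) (h : (Matrix.fromBlocks S Bᵀ B T).PosSemidef) :
    ∃ L : Matrix d a ℝ, L * S = B ∧ (T - L * S * Lᵀ).PosSemidef := by
  classical
  obtain ⟨N, hN⟩ := hx_gram _ h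
  obtain ⟨P, Q, rfl⟩ : ∃ (P : Matrix (a ⊕ d) a ℝ) (Q : Matrix (a ⊕ d) d ℝ),
      N = Matrix.fromCols P Q :=
    ⟨N.toCols₁, N.toCols₂, (Matrix.fromCols_toCols N).symm⟩
  rw [Matrix.transpose_fromCols, Matrix.fromRows_mul_fromCols, Matrix.fromBlocks_inj] at hN
  obtain ⟨hS, -, hB, hT⟩ := hN
  obtain ⟨Z, hZ⟩ := hx_normal P Q
  have e1 : Zᵀ * S = B := by
    rw [hS, hB]
    have := congrArg Matrix.transpose hZ
    simpa [Matrix.transpose_mul] using this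
  refine ⟨Zᵀ, e1, ?_⟩
  have e2 : T - Zᵀ * S * Zᵀᵀ = (Q - P * Z)ᴴ * (Q - P * Z) := by
    have h3 : Zᵀ * (Pᵀ * P) = Qᵀ * P := by rw [← hS, ← hB, e1]
    have h4 : Zᵀ * (Pᵀ * Q) = Qᵀ * (P * Z) := by
      rw [← hZ, ← Matrix.mul_assoc, h3, Matrix.mul_assoc]
    rw [e1, hB, hT, Matrix.conjTranspose_eq_transpose_of_trivial]
    simp only [Matrix.transpose_sub, Matrix.transpose_mul, Matrix.transpose_transpose,
      Matrix.sub_mul, Matrix.mul_sub, Matrix.mul_assoc]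
    have h5 : Zᵀ * (Pᵀ * (P * Z)) = Qᵀ * (P * Z) := by
      rw [← Matrix.mul_assoc Pᵀ, hZ, h4]
    rw [h4, h5]
    abel
  rw [e2]
  exact Matrix.posSemidef_conjTranspose_mul_self _

theorem hx_border {n m : ℕ} (X : Matrix (Fin n) (Fin m) ℝ) (Y : Matrix (Fin n) (Fin n) ℝ)
    (Wxx : Matrix (Fin n × Fin m) (Fin n × Fin m) ℝ)
    (Wxy : Matrix (Fin n × Fin m) (Fin n × Fin n) ℝ)
    (Wyy : Matrix (Fin n × Fin n) (Fin n × Fin n) ℝ) :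
    (bordered X Y Wxx Wxy Wyy).PosSemidef ↔
    (Matrix.fromBlocks Wxx Wxy Wxyᵀ Wyy -
      Matrix.vecMulVec (Sum.elim (vecXt X) (vecY Y)) (Sum.elim (vecXt X) (vecY Y))).PosSemidef := by
  have h1 : (Matrix.of fun _ _ : Unit => (1 : ℝ)) = 1 := by
    ext i j; simp
  haveI : Invertible (1 : Matrix Unit Unit ℝ) := invertibleOne
  have := Matrix.PosDef.fromBlocks₁₁ (A := (1 : Matrix Unit Unit ℝ))
    (Matrix.of fun (_ : Unit) q => Sum.elim (vecXt X) (vecY Y) q)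
    (Matrix.fromBlocks Wxx Wxy Wxyᵀ Wyy) Matrix.PosDef.one
  unfold bordered
  rw [h1]
  have h2 : (Matrix.of fun (_ : Unit) q => Sum.elim (vecXt X) (vecY Y) q)ᴴ =
    (Matrix.of fun q (_ : Unit) => Sum.elim (vecXt X) (vecY Y) q) := by
    ext i j; simp
  rw [h2] at this
  rw [this]
  have h3 : (Matrix.of fun q (_ : Unit) => Sum.elim (vecXt X) (vecY Y) q) * (1 : Matrix Unit Unit ℝ)⁻¹ *
    (Matrix.of fun (_ : Unit) q => Sum.elim (vecXt X) (vecY Y) q) =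
    Matrix.vecMulVec (Sum.elim (vecXt X) (vecY Y)) (Sum.elim (vecXt X) (vecY Y)) := by
    ext i j; simp [Matrix.mul_apply, Matrix.vecMulVec_apply]
  rw [h3]

theorem hx_fwd {n m : ℕ} (X : Matrix (Fin n) (Fin m) ℝ) (Y : Matrix (Fin n) (Fin n) ℝ)
    (Wxx : Matrix (Fin n × Fin m) (Fin n × Fin m) ℝ)
    (Wxy : Matrix (Fin n × Fin m) (Fin n × Fin n) ℝ)
    (Wyy : Matrix (Fin n × Fin n) (Fin n × Fin n) ℝ)
    (hb : (bordered X Y Wxx Wxy Wyy).PosSemidef)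
    (hy : ∀ p q : Fin n, (∑ i : Fin n, Wyy (i, p) (i, q)) = Y p q)
    (hx : ∀ (j : Fin m) (q : Fin n), (∑ i : Fin n, Wxy (i, j) (i, q)) = X q j) :
    Wxx.PosSemidef ∧ (Wxx - Matrix.vecMulVec (vecXt X) (vecXt X)).PosSemidef ∧
    (Matrix.fromBlocks (Matrix.of fun j l : Fin m => ∑ i : Fin n, Wxx (i, j) (i, l))
            Xᵀ X Y).PosSemidef := by
  refine ⟨?_, ?_, ?_⟩
  · exact hb.submatrix (fun p => Sum.inr (Sum.inl p))
  · exact ((hx_border X Y Wxx Wxy Wyy).1 hb).submatrix Sum.inl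
  · have := Matrix.posSemidef_sum Finset.univ (fun (i : Fin n) _ =>
      hb.submatrix (fun s : Fin m ⊕ Fin n => Sum.inr (Sum.map (fun j => (i, j)) (fun j => (i, j)) s)))
    convert this using 1
    ext s t
    rcases s with s | s <;> rcases t with t | t <;>
      simp [Matrix.sum_apply, bordered, hy, hx]

theorem hx_mid {n m : ℕ} (X : Matrix (Fin n) (Fin m) ℝ) (Y : Matrix (Fin n) (Fin n) ℝ)
    (S : Matrix (Fin m) (Fin m) ℝ) (hY : Y.PosSemidef) (hY1 : (1 - Y).PosSemidef)
    (h : (Matrix.fromBlocks S Xᵀ X Y).PosSemidef) :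
    (Matrix.fromBlocks (S - Xᵀ * X) (X - Y * X)ᵀ (X - Y * X) (Y - Y * Y)).PosSemidef := by
  have hYs : Yᵀ = Y := Matrix.isHermitian_iff_isSymm.1 hY.isHermitian
  have hYY : (Y - Y * Y).PosSemidef := by
    have a1 := hY1.mul_mul_conjTranspose_same Y
    have a2 := hY.mul_mul_conjTranspose_same (1 - Y)
    have := a1.add a2
    rw [hY.isHermitian, hY1.isHermitian] at this
    convert this using 1
    noncomm_ring
  have h' : (Matrix.fromBlocks Y Xᵀᵀ Xᵀ S).PosSemidef := by
    have := h.submatrix (Sum.swap : Fin n ⊕ Fin m → Fin m ⊕ Fin n)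
    rwa [Matrix.fromBlocks_submatrix_sum_swap_sum_swap] at this
  obtain ⟨L, hL, hR⟩ := hx_schur _ _ _ h'
  have hX : X = Y * Lᵀ := by
    have := congrArg Matrix.transpose hL
    rw [Matrix.transpose_mul, hYs, Matrix.transpose_transpose] at this
    exact this.symm
  have p1 := hYY.mul_mul_conjTranspose_same (Matrix.fromRows L (1 : Matrix (Fin n) (Fin n) ℝ))
  have p2 : (Matrix.fromBlocks (S - L * Y * Lᵀ) 0 0 (0 : Matrix (Fin n) (Fin n) ℝ)).PosSemidef := by
    have := hR.mul_mul_conjTranspose_same (Matrix.fromRows (1 : Matrix (Fin m) (Fin m) ℝ) (0 : Matrix (Fin n) (Fin m) ℝ))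
    convert this using 1
    rw [Matrix.conjTranspose_eq_transpose_of_trivial, Matrix.transpose_fromRows,
      Matrix.fromRows_mul, Matrix.fromRows_mul_fromCols]
    simp
  convert p1.add p2 using 1
  rw [Matrix.conjTranspose_eq_transpose_of_trivial, Matrix.transpose_fromRows,
      Matrix.fromRows_mul, Matrix.fromRows_mul_fromCols, Matrix.fromBlocks_add, Matrix.fromBlocks_inj]
  subst hX
  simp only [Matrix.transpose_sub, Matrix.transpose_mul, Matrix.transpose_transpose, hYs,
    Matrix.sub_mul, Matrix.mul_sub, Matrix.mul_assoc, Matrix.transpose_one, Matrix.one_mul,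
    Matrix.mul_one]
  refine ⟨?_, ?_, ?_, ?_⟩ <;> abel

theorem hx_bwd {n m : ℕ} (hn : 1 ≤ n) (X : Matrix (Fin n) (Fin m) ℝ)
    (Y : Matrix (Fin n) (Fin n) ℝ)
    (Wxx : Matrix (Fin n × Fin m) (Fin n × Fin m) ℝ)
    (hY : Y.PosSemidef) (hY1 : (1 - Y).PosSemidef)
    (hV : (Wxx - Matrix.vecMulVec (vecXt X) (vecXt X)).PosSemidef)
    (hS : (Matrix.fromBlocks (Matrix.of fun j l : Fin m => ∑ i : Fin n, Wxx (i, j) (i, l))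
            Xᵀ X Y).PosSemidef) :
    ∃ (Wxy : Matrix (Fin n × Fin m) (Fin n × Fin n) ℝ)
      (Wyy : Matrix (Fin n × Fin n) (Fin n × Fin n) ℝ),
      Wyy.IsSymm ∧ (bordered X Y Wxx Wxy Wyy).PosSemidef ∧
      (∀ p q : Fin n, (∑ i : Fin n, Wyy (i, p) (i, q)) = Y p q) ∧
      (∀ (j : Fin m) (q : Fin n), (∑ i : Fin n, Wxy (i, j) (i, q)) = X q j) := by
  have hYs : Yᵀ = Y := Matrix.isHermitian_iff_isSymm.1 hY.isHermitian
  have hmid := hx_mid X Y _ hY hY1 hS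
  obtain ⟨L, hL, hR⟩ := hx_schur _ _ _ hmid
  obtain ⟨V, hVe⟩ : ∃ V, V = Wxx - Matrix.vecMulVec (vecXt X) (vecXt X) := ⟨_, rfl⟩
  rw [← hVe] at hV
  have hVs : ∀ s t, V s t = V t s := fun s t =>
    (Matrix.isHermitian_iff_isSymm.1 hV.isHermitian).apply t s
  obtain ⟨S, hSe⟩ : ∃ S, S = (Matrix.of fun j l : Fin m => ∑ i : Fin n, Wxx (i, j) (i, l))
    - Xᵀ * X := ⟨_, rfl⟩
  rw [← hSe] at hL hR
  have hSV : ∀ j l, ∑ i, V (i, j) (i, l) = S j l := by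
    intro j l
    simp [hVe, hSe, Matrix.mul_apply, Matrix.vecMulVec_apply, vecXt, Finset.sum_sub_distrib]
  obtain ⟨R, hRe⟩ : ∃ R, R = Y - Y * Y - L * S * Lᵀ := ⟨_, rfl⟩
  rw [← hRe] at hR
  let i0 : Fin n := ⟨0, hn⟩
  obtain ⟨L', hL'⟩ : ∃ L' : Matrix (Fin n × Fin n) (Fin n × Fin m) ℝ,
    L' = Matrix.of fun p s => if p.1 = s.1 then L p.2 s.2 else 0 := ⟨_, rfl⟩
  obtain ⟨F, hF⟩ : ∃ F : Matrix (Fin n × Fin n) (Fin n) ℝ,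
    F = Matrix.of fun p s => if p.1 = i0 ∧ p.2 = s then 1 else 0 := ⟨_, rfl⟩
  have hE := hR.mul_mul_conjTranspose_same F
  rw [Matrix.conjTranspose_eq_transpose_of_trivial] at hE
  have hLm : ∀ {c : Type} (M : Matrix (Fin n × Fin m) c ℝ) i p t,
      (L' * M) (i, p) t = ∑ j, L p j * M (i, j) t := by
    intro c M i p t
    simp [hL', Matrix.mul_apply, Fintype.sum_prod_type]
  have hmL : ∀ {c : Type} (M : Matrix c (Fin n × Fin m) ℝ) i p t,
      (M * L'ᵀ) t (i, p) = ∑ j, M t (i, j) * L p j := by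
    intro c M i p t
    simp [hL', Matrix.mul_apply, Fintype.sum_prod_type]
  have hEs : ∀ p q, ∑ i, (F * R * Fᵀ) (i, p) (i, q) = R p q := by
    intro p q
    rw [Finset.sum_eq_single i0]
    · simp [hF, Matrix.mul_apply]
    · intro b _ hb
      simp [hF, Matrix.mul_apply, hb]
    · simp
  let Wxy := V * L'ᵀ + Matrix.vecMulVec (vecXt X) (vecY Y)
  let Wyy := L' * V * L'ᵀ + F * R * Fᵀ + Matrix.vecMulVec (vecY Y) (vecY Y)
  have hb : (bordered X Y Wxx Wxy Wyy).PosSemidef := by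
    rw [hx_border]
    have p1 := hV.mul_mul_conjTranspose_same
      (Matrix.fromRows (1 : Matrix (Fin n × Fin m) (Fin n × Fin m) ℝ) L')
    have p2 := hE.mul_mul_conjTranspose_same
      (Matrix.fromRows (0 : Matrix (Fin n × Fin m) (Fin n × Fin n) ℝ)
        (1 : Matrix (Fin n × Fin n) (Fin n × Fin n) ℝ))
    have p3 := p1.add p2
    rw [Matrix.conjTranspose_eq_transpose_of_trivial, Matrix.transpose_fromRows,
      Matrix.fromRows_mul, Matrix.fromRows_mul_fromCols,
      Matrix.conjTranspose_eq_transpose_of_trivial, Matrix.transpose_fromRows,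
      Matrix.fromRows_mul, Matrix.fromRows_mul_fromCols, Matrix.fromBlocks_add] at p3
    convert p3 using 1
    have hVt : Vᵀ = V := Matrix.isHermitian_iff_isSymm.1 hV.isHermitian
    have hW : Wxyᵀ = L' * V + Matrix.vecMulVec (vecY Y) (vecXt X) := by
      simp [Wxy, Matrix.transpose_mul, hVt, Matrix.transpose_vecMulVec]
    rw [hW]
    ext s t
    rcases s with s | s <;> rcases t with t | t <;>
      simp [Wxy, Wyy, Matrix.vecMulVec_apply, hVe]
  refine ⟨Wxy, Wyy, ?_, hb, ?_, ?_⟩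
  · exact Matrix.isHermitian_iff_isSymm.1
      (hb.submatrix (fun p => Sum.inr (Sum.inr p))).isHermitian
  · intro p q
    simp only [Wyy, Matrix.add_apply, Finset.sum_add_distrib, hEs, Matrix.mul_assoc L', hLm, hmL]
    have e1 : ∑ i, ∑ j, L p j * ∑ l, V (i, j) (i, l) * L q l = (L * (S * Lᵀ)) p q := by
      rw [Finset.sum_comm]
      simp only [Matrix.mul_apply, Matrix.transpose_apply]
      refine Finset.sum_congr rfl fun j _ => ?_
      rw [← Finset.mul_sum, Finset.sum_comm]
      simp only [← Finset.sum_mul, hSV]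
    have e2 : ∑ i, Matrix.vecMulVec (vecY Y) (vecY Y) (i, p) (i, q) = (Y * Y) p q := by
      have e3 : (Y * Y) p q = (Y * Yᵀ) p q := by rw [hYs]
      rw [e3]
      simp [Matrix.vecMulVec_apply, vecY, Matrix.mul_apply]
    rw [e1, e2, hRe]
    simp [Matrix.mul_assoc]
  · intro j q
    simp only [Wxy, Matrix.add_apply, Finset.sum_add_distrib, hmL]
    have e1 : ∑ i, ∑ l, V (i, j) (i, l) * L q l = (L * S) q j := by
      rw [Finset.sum_comm]
      simp only [Matrix.mul_apply, ← Finset.sum_mul, ← hSV]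
      refine Finset.sum_congr rfl fun l _ => ?_
      rw [mul_comm]
      simp only [fun i => hVs (i, j) (i, l)]
    have e2 : ∑ i, Matrix.vecMulVec (vecXt X) (vecY Y) (i, j) (i, q) = (Y * X) q j := by
      simp [Matrix.vecMulVec_apply, vecY, vecXt, Matrix.mul_apply, mul_comm]
    rw [e1, e2, hL]
    simp

/-- Theorem 3.2: the full Shor relaxation (3.2) and the
compact Shor relaxation (3.3) have the same optimal value. -/
theorem stmt14 {n m : ℕ} (hn : 1 ≤ n) (hm : 1 ≤ m) (k : ℕ)
    (C : Matrix (Fin n) (Fin n) ℝ) (hC : C.PosSemidef)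
    (H : Matrix (Fin n × Fin m) (Fin n × Fin m) ℝ) (hH : H.PosSemidef)
    (D : Matrix (Fin n) (Fin m) ℝ)
    {ι : Type*} [Fintype ι] (A : ι → Matrix (Fin n) (Fin m) ℝ) (b : ι → ℝ) :
    sInf {x : EReal | ∃ (Y : Matrix (Fin n) (Fin n) ℝ)
        (X : Matrix (Fin n) (Fin m) ℝ)
        (Wxx : Matrix (Fin n × Fin m) (Fin n × Fin m) ℝ)
        (Wxy : Matrix (Fin n × Fin m) (Fin n × Fin n) ℝ)
        (Wyy : Matrix (Fin n × Fin n) (Fin n × Fin n) ℝ),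
        Y.PosSemidef ∧ ((1 : Matrix (Fin n) (Fin n) ℝ) - Y).PosSemidef ∧
        Y.trace ≤ (k : ℝ) ∧ (∀ i, frob (A i) X ≤ b i) ∧
        Wxx.IsSymm ∧ Wyy.IsSymm ∧
        (bordered X Y Wxx Wxy Wyy).PosSemidef ∧
        (∀ p q : Fin n, (∑ i : Fin n, Wyy (i, p) (i, q)) = Y p q) ∧
        (∀ (j : Fin m) (q : Fin n), (∑ i : Fin n, Wxy (i, j) (i, q)) = X q j) ∧
        x = ((frob C Y + frob Wxx H + frob D X : ℝ) : EReal)} =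
      sInf {x : EReal | ∃ (Y : Matrix (Fin n) (Fin n) ℝ)
        (X : Matrix (Fin n) (Fin m) ℝ)
        (Wxx : Matrix (Fin n × Fin m) (Fin n × Fin m) ℝ),
        Y.PosSemidef ∧ ((1 : Matrix (Fin n) (Fin n) ℝ) - Y).PosSemidef ∧
        Y.trace ≤ (k : ℝ) ∧ (∀ i, frob (A i) X ≤ b i) ∧
        Wxx.PosSemidef ∧
        (Wxx - Matrix.vecMulVec (vecXt X) (vecXt X)).PosSemidef ∧
        (Matrix.fromBlocks
            (Matrix.of fun j l : Fin m => ∑ i : Fin n, Wxx (i, j) (i, l))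
            Xᵀ X Y).PosSemidef ∧
        x = ((frob C Y + frob Wxx H + frob D X : ℝ) : EReal)} := by
  congr 1
  ext x
  constructor
  · rintro ⟨Y, X, Wxx, Wxy, Wyy, h1, h2, h3, h4, h5, h6, h7, h8, h9, h10⟩
    obtain ⟨a1, a2, a3⟩ := hx_fwd X Y Wxx Wxy Wyy h7 h8 h9
    exact ⟨Y, X, Wxx, h1, h2, h3, h4, a1, a2, a3, h10⟩
  · rintro ⟨Y, X, Wxx, h1, h2, h3, h4, h5, h6, h7, h8⟩
    obtain ⟨Wxy, Wyy, a1, a2, a3, a4⟩ := hx_bwd hn X Y Wxx h1 h2 h6 h7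
    exact ⟨Y, X, Wxx, Wxy, Wyy, h1, h2, h3, h4,
      Matrix.isHermitian_iff_isSymm.1 h5.isHermitian, a1, a2, a3, a4, h8⟩
end

section
/- Let n, m ≥ 1, k ∈ ℕ, γ > 0, C ∈ S^n_+, D ∈ ℝ^{n×m}, and let (A_i, b_i)_{i∈I} be a finite family with A_i ∈ ℝ^{n×m}, b_i ∈ ℝ. Define v_Shor as the infimum of ⟨C,Y⟩ + (1/(2γ))·tr(W_xx) + ⟨D,X⟩ over tuples (Y, X, W_xx) with Y ∈ S^n_+, Y ⪯ I_n, tr(Y) ≤ k; X ∈ ℝ^{n×m} with ⟨A_i,X⟩ ≤ b_i for all i ∈ I; W_xx ∈ S^{nm}_+ with W_xx ⪰ vec(X^⊤)vec(X^⊤)^⊤; and [[Σ_{i∈[n]} W_xx^{(i,i)}, X^⊤],[X, Y]] ⪰ 0, where W_xx^{(i,i)} ∈ ℝ^{m×m} are the diagonal m×m blocks of W_xx. Define v_MPRT as the infimum of ⟨C,Y⟩ + (1/(2γ))·tr(θ) + ⟨D,X⟩ over tuples (Y, X, θ) with Y ∈ S^n_+, Y ⪯ I_n, tr(Y) ≤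 k; X ∈ ℝ^{n×m} with ⟨A_i,X⟩ ≤ b_i for all i; θ ∈ S^m_+; and [[θ, X^⊤],[X, Y]] ⪰ 0. Then v_Shor ≥ v_MPRT; more precisely, every feasible (Y, X, W_xx) of the first problem yields a feasible (Y, X, θ) of the second problem with θ = Σ_{i∈[n]} W_xx^{(i,i)} and the same objective value. -/
open Matrix

/-- Feasibility for the compact Shor relaxation with Frobenius regularization. -/
def FeasShor {n m : ℕ} (k : ℕ) {ι : Type*}
    (A : ι → Matrix (Fin n) (Fin m) ℝ) (b : ι → ℝ)
    (Y : Matrix (Fin n) (Fin n) ℝ) (X : Matrix (Fin n) (Fin m) ℝ)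
    (Wxx : Matrix (Fin n × Fin m) (Fin n × Fin m) ℝ) : Prop :=
  Y.PosSemidef ∧ ((1 : Matrix (Fin n) (Fin n) ℝ) - Y).PosSemidef ∧
    Y.trace ≤ (k : ℝ) ∧ (∀ i, frob (A i) X ≤ b i) ∧
    Wxx.PosSemidef ∧
    (Wxx - Matrix.vecMulVec (vecXt X) (vecXt X)).PosSemidef ∧
    (Matrix.fromBlocks
        (Matrix.of fun j l : Fin m => ∑ i : Fin n, Wxx (i, j) (i, l))
        Xᵀ X Y).PosSemidef

/-- Feasibility for the matrix perspective relaxation of Bertsimas et al. -/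
def FeasMPRT {n m : ℕ} (k : ℕ) {ι : Type*}
    (A : ι → Matrix (Fin n) (Fin m) ℝ) (b : ι → ℝ)
    (Y : Matrix (Fin n) (Fin n) ℝ) (X : Matrix (Fin n) (Fin m) ℝ)
    (θ : Matrix (Fin m) (Fin m) ℝ) : Prop :=
  Y.PosSemidef ∧ ((1 : Matrix (Fin n) (Fin n) ℝ) - Y).PosSemidef ∧
    Y.trace ≤ (k : ℝ) ∧ (∀ i, frob (A i) X ≤ b i) ∧
    θ.PosSemidef ∧ (Matrix.fromBlocks θ Xᵀ X Y).PosSemidef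

/-- Proposition 3.3. The compact Shor relaxation is at least
as strong as the matrix perspective relaxation: `v_Shor ≥ v_MPRT`; more
precisely, every Shor-feasible `(Y,X,Wxx)` yields an MPRT-feasible `(Y,X,θ)`
with `θ = Σᵢ Wxx^{(i,i)}` and the same objective value. -/
theorem stmt15 {n m : ℕ} (hn : 1 ≤ n) (hm : 1 ≤ m) (k : ℕ) (γ : ℝ) (hγ : 0 < γ)
    (C : Matrix (Fin n) (Fin n) ℝ) (hC : C.PosSemidef)
    (D : Matrix (Fin n) (Fin m) ℝ)
    {ι : Type*} [Fintype ι] (A : ι → Matrix (Fin n) (Fin m) ℝ) (b : ι → ℝ) :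
    (sInf {x : EReal | ∃ Y X θ, FeasMPRT k A b Y X θ ∧
        x = ((frob C Y + (1 / (2 * γ)) * θ.trace + frob D X : ℝ) : EReal)}
      ≤ sInf {x : EReal | ∃ Y X Wxx, FeasShor k A b Y X Wxx ∧
        x = ((frob C Y + (1 / (2 * γ)) * Wxx.trace + frob D X : ℝ) : EReal)}) ∧
    (∀ Y X Wxx, FeasShor k A b Y X Wxx →
      FeasMPRT k A b Y X
        (Matrix.of fun j l : Fin m => ∑ i : Fin n, Wxx (i, j) (i, l)) ∧
      frob C Y + (1 / (2 * γ))
          * (Matrix.of fun j l : Fin m => ∑ i : Fin n, Wxx (i, j) (i, l)).trace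
          + frob D X
        = frob C Y + (1 / (2 * γ)) * Wxx.trace + frob D X) := by
  have key : ∀ Y X Wxx, FeasShor k A b Y X Wxx →
      FeasMPRT k A b Y X
        (Matrix.of fun j l : Fin m => ∑ i : Fin n, Wxx (i, j) (i, l)) ∧
      frob C Y + (1 / (2 * γ))
          * (Matrix.of fun j l : Fin m => ∑ i : Fin n, Wxx (i, j) (i, l)).trace
          + frob D X
        = frob C Y + (1 / (2 * γ)) * Wxx.trace + frob D X := by
    rintro Y X W ⟨h1, h2, h3, h4, h5, h6, h7⟩
    refine ⟨⟨h1, h2, h3, h4, ?_, h7⟩, ?_⟩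
    · exact h7.submatrix Sum.inl
    · have ht : (Matrix.of fun j l : Fin m => ∑ i : Fin n, W (i, j) (i, l)).trace
          = W.trace := by
        simp only [Matrix.trace, Matrix.diag, Matrix.of_apply]
        rw [Fintype.sum_prod_type, Finset.sum_comm]
      rw [ht]
  refine ⟨?_, key⟩
  apply sInf_le_sInf
  rintro x ⟨Y, X, W, h, rfl⟩
  obtain ⟨hf, he⟩ := key Y X W h
  exact ⟨Y, X, _, hf, by rw [he]⟩
end

section
/- Let n, m ≥ 1, Ω ⊆ [n]×[m], A ∈ ℝ^{n×m}, and λ ≥ 0. For i ∈ [n] let H^i ∈ S^m be the diagonal matrix with (H^i)_{j,j} = 1 if (i,j) ∈ Ω and 0 otherwise, and let P(X) denote the matrix with P(X)_{i,j} = X_{i,j} if (i,j) ∈ Ω and 0 otherwise. Define v₁ as the infimum of Σ_{i∈[n]} ⟨W^{(i,i)}, H^i⟩ − 2⟨P(X), P(A)⟩ + ⟨P(A), P(A)⟩ + λ·tr(Y) over tuples (Y, X, W) with Y ∈ S^n, 0 ⪯ Y ⪯ I_n; X ∈ ℝ^{n×m}; W ∈ S^{nm}_+ (indexed by pairs (i,j)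 ∈ [n]×[m] so that its diagonal m×m blocks are W^{(i,i)}) with W ⪰ vec(X^⊤)vec(X^⊤)^⊤; and [[Σ_{i∈[n]} W^{(i,i)}, X^⊤],[X, Y]] ⪰ 0. Define v₂ as the infimum of Σ_{i∈[n]} ⟨S^i, H^i⟩ − 2⟨P(X), P(A)⟩ + ⟨P(A), P(A)⟩ + λ·tr(Y) over tuples (Y, X, S^1,…,S^n) with Y ∈ S^n, 0 ⪯ Y ⪯ I_n; X ∈ ℝ^{n×m}; S^i ∈ S^m_+ with S^i ⪰ X_{i,·}X_{i,·}^⊤ for every i ∈ [n], where X_{i,·} ∈ ℝ^m is the i-th row of X as a column vector; and [[Σ_{i∈[n]} S^i, X^⊤],[X, Y]] ⪰ 0. Then v₁ = v₂. -/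
open Matrix

/-- The mask `P(X)` keeping the observed entries. -/
def maskP {n m : ℕ} (Obs : Set (Fin n × Fin m)) [DecidablePred (· ∈ Obs)]
    (X : Matrix (Fin n) (Fin m) ℝ) : Matrix (Fin n) (Fin m) ℝ :=
  Matrix.of fun i j => if (i, j) ∈ Obs then X i j else 0

/-- The diagonal matrix `Hⁱ` with `(Hⁱ)_{j,j} = 1` iff `(i,j)` is observed. -/
def Hdiag {n m : ℕ} (Obs : Set (Fin n × Fin m)) [DecidablePred (· ∈ Obs)]
    (i : Fin n) : Matrix (Fin m) (Fin m) ℝ :=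
  Matrix.of fun j l => if j = l ∧ (i, j) ∈ Obs then 1 else 0

lemma blockPSD_aux {n m : ℕ} (D : Fin n → Matrix (Fin m) (Fin m) ℝ)
    (hD : ∀ i, (D i).PosSemidef) :
    (Matrix.of fun p q : Fin n × Fin m => if p.1 = q.1 then D p.1 p.2 q.2 else 0).PosSemidef := by
  refine Matrix.PosSemidef.of_dotProduct_mulVec_nonneg ?_ ?_
  · ext p q
    rcases p with ⟨i, j⟩
    rcases q with ⟨k, l⟩
    by_cases h : i = k
    · subst h
      simpa using (hD i).isHermitian.apply j l
    · simp [h, Ne.symm h]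
  · intro x
    have h : ∀ i, 0 ≤ star (fun j => x (i, j)) ⬝ᵥ (D i *ᵥ fun j => x (i, j)) :=
      fun i => (hD i).dotProduct_mulVec_nonneg _
    have := Finset.sum_nonneg (fun i (_ : i ∈ Finset.univ) => h i)
    convert this using 1
    simp only [dotProduct, mulVec, Fintype.sum_prod_type, Matrix.of_apply, ite_mul, zero_mul,
      Pi.star_apply]
    refine Finset.sum_congr rfl fun i _ => Finset.sum_congr rfl fun j _ => ?_
    congr 1
    rw [Finset.sum_eq_single i]
    · simp
    · intro b _ hb
      simp [Ne.symm hb]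
    · simp

/-- Proposition 4.1, low-rank matrix completion:
the Shor relaxation (4.2) and its reduced form (4.3) have equal values. -/
theorem stmt16 {n m : ℕ} (hn : 1 ≤ n) (hm : 1 ≤ m)
    (Obs : Set (Fin n × Fin m)) [DecidablePred (· ∈ Obs)]
    (A : Matrix (Fin n) (Fin m) ℝ) (lam : ℝ) (hlam : 0 ≤ lam) :
    sInf {x : EReal | ∃ (Y : Matrix (Fin n) (Fin n) ℝ)
        (X : Matrix (Fin n) (Fin m) ℝ)
        (W : Matrix (Fin n × Fin m) (Fin n × Fin m) ℝ),
        Y.PosSemidef ∧ ((1 : Matrix (Fin n) (Fin n) ℝ) - Y).PosSemidef ∧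
        W.PosSemidef ∧
        (W - Matrix.vecMulVec (fun p : Fin n × Fin m => X p.1 p.2)
              (fun p : Fin n × Fin m => X p.1 p.2)).PosSemidef ∧
        (Matrix.fromBlocks
            (Matrix.of fun j l : Fin m => ∑ i : Fin n, W (i, j) (i, l))
            Xᵀ X Y).PosSemidef ∧
        x = (((∑ i : Fin n, frob (Matrix.of fun j l : Fin m => W (i, j) (i, l))
                  (Hdiag Obs i))
              - 2 * frob (maskP Obs X) (maskP Obs A)
              + frob (maskP Obs A) (maskP Obs A) + lam * Y.trace : ℝ) : EReal)} =
      sInf {x : EReal | ∃ (Y : Matrix (Fin n) (Fin n) ℝ)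
        (X : Matrix (Fin n) (Fin m) ℝ)
        (S : Fin n → Matrix (Fin m) (Fin m) ℝ),
        Y.PosSemidef ∧ ((1 : Matrix (Fin n) (Fin n) ℝ) - Y).PosSemidef ∧
        (∀ i, (S i).PosSemidef) ∧
        (∀ i, (S i - Matrix.vecMulVec (fun j => X i j)
              (fun j => X i j)).PosSemidef) ∧
        (Matrix.fromBlocks (∑ i, S i) Xᵀ X Y).PosSemidef ∧
        x = (((∑ i : Fin n, frob (S i) (Hdiag Obs i))
              - 2 * frob (maskP Obs X) (maskP Obs A)
              + frob (maskP Obs A) (maskP Obs A) + lam * Y.trace : ℝ) : EReal)} := by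
  congr 1
  ext x
  constructor
  · rintro ⟨Y, X, W, hY, hY1, hW, hWX, hB, hx⟩
    refine ⟨Y, X, fun i => Matrix.of fun j l : Fin m => W (i, j) (i, l), hY, hY1, ?_, ?_, ?_, hx⟩
    · intro i
      exact hW.submatrix (fun j => (i, j))
    · intro i
      exact hWX.submatrix (fun j => (i, j))
    · convert hB using 2
      ext j l
      simp [Matrix.sum_apply]
  · rintro ⟨Y, X, S, hY, hY1, hS, hSX, hB, hx⟩
    have hD := blockPSD_aux _ hSX
    have hv := Matrix.posSemidef_vecMulVec_self_star (fun p : Fin n × Fin m => X p.1 p.2)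
    rw [star_trivial] at hv
    have hW : ∀ i j l, ((Matrix.of fun p q : Fin n × Fin m => if p.1 = q.1 then
        (S p.1 - Matrix.vecMulVec (fun j => X p.1 j) (fun j => X p.1 j)) p.2 q.2 else 0) +
        Matrix.vecMulVec (fun p : Fin n × Fin m => X p.1 p.2)
          (fun p : Fin n × Fin m => X p.1 p.2)) (i, j) (i, l) = S i j l := by
      intro i j l
      simp [Matrix.vecMulVec_apply]
    refine ⟨Y, X, _, hY, hY1, hD.add hv, ?_, ?_, ?_⟩
    · rw [add_sub_cancel_right]
      exact hD
    · simp only [hW]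
      convert hB using 2
      ext j l
      simp [Matrix.sum_apply]
    · simp only [hW]
      exact hx
end

section
/- Let n, m, p ≥ 1, B ∈ ℝ^{n×m}, A ∈ ℝ^{n×p}, and μ ≥ 0. Define v₁ as the infimum of ⟨A^⊤A, Σ_{i∈[m]} W^{(i,i)}⟩ + ⟨B, B⟩ − 2⟨AX, B⟩ + μ·tr(Y) over tuples (Y, X, W) with Y ∈ S^m, 0 ⪯ Y ⪯ I_m; X ∈ ℝ^{p×m}; W ∈ S^{pm}_+ (with vec(X) ∈ ℝ^{pm} partitioned into m blocks of length p—the columns of X—and W accordingly an m×m array of p×p blocks W^{(i,j)}) satisfying W ⪰ vec(X)vec(X)^⊤; and [[Σ_{i∈[m]} W^{(i,i)}, X],[X^⊤, Y]] ⪰ 0. Define v₂ as the infimum of ⟨A^⊤A, θ⟩ + ⟨B, B⟩ − 2⟨AX, B⟩ + μ·tr(Y) over tuples (Y, X, θ) with Y ∈ S^m, 0 ⪯ Y ⪯ I_m; X ∈ ℝ^{p×m}; θ ∈ S^p_+; and [[θ, X],[X^⊤, Y]] ⪰ 0. Then v₁ = v₂. -/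
open Matrix

/-- Proposition 4.2, reduced rank regression:
the Shor relaxation (4.5) and the matrix perspective relaxation (4.6)
have equal values. -/
theorem stmt17 {n m p : ℕ} (hn : 1 ≤ n) (hm : 1 ≤ m) (hp : 1 ≤ p)
    (B : Matrix (Fin n) (Fin m) ℝ) (A : Matrix (Fin n) (Fin p) ℝ)
    (μ : ℝ) (hμ : 0 ≤ μ) :
    sInf {x : EReal | ∃ (Y : Matrix (Fin m) (Fin m) ℝ)
        (X : Matrix (Fin p) (Fin m) ℝ)
        (W : Matrix (Fin m × Fin p) (Fin m × Fin p) ℝ),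
        Y.PosSemidef ∧ ((1 : Matrix (Fin m) (Fin m) ℝ) - Y).PosSemidef ∧
        W.PosSemidef ∧
        (W - Matrix.vecMulVec (fun q : Fin m × Fin p => X q.2 q.1)
              (fun q : Fin m × Fin p => X q.2 q.1)).PosSemidef ∧
        (Matrix.fromBlocks
            (Matrix.of fun ρ σ : Fin p => ∑ i : Fin m, W (i, ρ) (i, σ))
            X Xᵀ Y).PosSemidef ∧
        x = ((frob (Aᵀ * A)
                (Matrix.of fun ρ σ : Fin p => ∑ i : Fin m, W (i, ρ) (i, σ))
              + frob B B - 2 * frob (A * X) B + μ * Y.trace : ℝ) : EReal)} =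
      sInf {x : EReal | ∃ (Y : Matrix (Fin m) (Fin m) ℝ)
        (X : Matrix (Fin p) (Fin m) ℝ)
        (θ : Matrix (Fin p) (Fin p) ℝ),
        Y.PosSemidef ∧ ((1 : Matrix (Fin m) (Fin m) ℝ) - Y).PosSemidef ∧
        θ.PosSemidef ∧
        (Matrix.fromBlocks θ X Xᵀ Y).PosSemidef ∧
        x = ((frob (Aᵀ * A) θ + frob B B - 2 * frob (A * X) B
              + μ * Y.trace : ℝ) : EReal)} := by
  congr 1
  ext x
  constructor
  · rintro ⟨Y, X, W, hY, hY1, hW, hWX, hb, rfl⟩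
    refine ⟨Y, X, _, hY, hY1, ?_, hb, rfl⟩
    exact hb.submatrix Sum.inl
  · rintro ⟨Y, X, θ, hY, hY1, hθ, hb, rfl⟩
    have h1 : (Matrix.fromBlocks θ X Xᵀ (1 : Matrix (Fin m) (Fin m) ℝ)).PosSemidef := by
      have h2 : (Matrix.fromBlocks (0 : Matrix (Fin p) (Fin p) ℝ) 0 0
          ((1 : Matrix (Fin m) (Fin m) ℝ) - Y)).PosSemidef := by
        have := hY1.conjTranspose_mul_mul_same
          (Matrix.fromCols (0 : Matrix (Fin m) (Fin p) ℝ) (1 : Matrix (Fin m) (Fin m) ℝ))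
        convert this using 1
        ext (i | i) (j | j) <;> simp [Matrix.mul_apply, Matrix.one_apply]
      have h3 := hb.add h2
      rw [Matrix.fromBlocks_add] at h3
      simpa using h3
    have hD : (θ - X * Xᵀ).PosSemidef := by
      haveI : Invertible (1 : Matrix (Fin m) (Fin m) ℝ) := invertibleOne
      have h4 := (Matrix.PosDef.fromBlocks₂₂ θ X
        (Matrix.PosDef.one : (1 : Matrix (Fin m) (Fin m) ℝ).PosDef)).1
          (by simpa [Matrix.conjTranspose_eq_transpose_of_trivial] using h1)
      simpa [Matrix.conjTranspose_eq_transpose_of_trivial] using h4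
    set D := θ - X * Xᵀ with hDdef
    let v : Fin m × Fin p → ℝ := fun q => X q.2 q.1
    have hK : (Matrix.kroneckerMap (· * ·)
        (((m : ℝ)⁻¹) • (1 : Matrix (Fin m) (Fin m) ℝ)) D).PosSemidef :=
      (Matrix.PosSemidef.one.smul (by positivity)).kronecker hD
    have hv : (Matrix.vecMulVec v v).PosSemidef := by
      simpa using Matrix.posSemidef_vecMulVec_self_star v
    have hm0 : (m : ℝ) ≠ 0 := by positivity
    have hs : (Matrix.of fun ρ σ : Fin p => ∑ i : Fin m,
        (Matrix.vecMulVec v v + Matrix.kroneckerMap (· * ·)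
        (((m : ℝ)⁻¹) • (1 : Matrix (Fin m) (Fin m) ℝ)) D) (i, ρ) (i, σ)) = θ := by
      ext ρ σ
      simp [Finset.sum_add_distrib, Matrix.vecMulVec_apply, v, hDdef, Matrix.mul_apply, hm0]
    refine ⟨Y, X, Matrix.vecMulVec v v + Matrix.kroneckerMap (· * ·)
        (((m : ℝ)⁻¹) • (1 : Matrix (Fin m) (Fin m) ℝ)) D, hY, hY1, hv.add hK, ?_, ?_, ?_⟩
    · simpa [v] using hK
    · rw [hs]; exact hb
    · rw [hs]
end

section
/- Let n ≥ 1, k ∈ ℕ, Q ∈ S^n_+, c ∈ ℝ^n with c ≥ 0 (componentwise), d ∈ ℝ^n, and let (A, b) define the linear constraints Ax ≤ b with A ∈ ℝ^{ℓ×n}, b ∈ ℝ^ℓ. Define v₁ as the infimum of c^⊤z + (1/2)⟨Q, W_xx⟩ + d^⊤x over tuples (z, x, W) with z ∈ [0,1]^n, Σ_i z_i ≤ k; x ∈ ℝ^n with Ax ≤ b; W ∈ S^{2n} partitioned into n×n blocks W = [[W_xx, W_xz],[W_xz^⊤, W_zz]] satisfying W ⪰ (x; z)(x; z)^⊤ (the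 outer product of the concatenated vector (x; z) ∈ ℝ^{2n} with itself), diag(W_zz) = z, and diag(W_xz) = x. Define v₂ as the infimum of c^⊤z + (1/2)⟨Q, X⟩ + d^⊤x over tuples (z, x, X) with z ∈ [0,1]^n, Σ_i z_i ≤ k; x ∈ ℝ^n with Ax ≤ b; X ∈ S^n with X ⪰ xx^⊤ and x_i² ≤ X_{i,i}·z_i for every i ∈ [n]. Then v₁ = v₂. -/
open Matrix

lemma aux_scalar (x X z : ℝ) (h0 : 0 ≤ z) (h1 : z ≤ 1) (hS : 0 ≤ X - x * x)
    (h : x ^ 2 ≤ X * z) :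
    ∃ β γ : ℝ, 0 ≤ γ ∧ β * (X - x * x) = x * (1 - z) ∧
      β * (X - x * x) * β + γ + z * z = z := by
  rcases hS.eq_or_lt with h2 | h2
  · have h3 : x * (1 - z) = 0 := by
      have h4 : X = x * x := by linarith
      subst h4
      have h5 : (x * (1 - z)) ^ 2 ≤ 0 := by
        have : x ^ 2 * (1 - z) ≤ 0 := by nlinarith
        nlinarith
      exact pow_eq_zero_iff (two_ne_zero) |>.1 (le_antisymm h5 (sq_nonneg _))
    refine ⟨0, z - z * z, by nlinarith, by rw [h3]; ring, by ring⟩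
  · refine ⟨x * (1 - z) / (X - x * x), z - z * z - x * (1 - z) * (x * (1 - z) / (X - x * x)),
      ?_, ?_, ?_⟩
    · have : x * (1 - z) * (x * (1 - z) / (X - x * x)) ≤ z - z * z := by
        rw [← mul_div_assoc, div_le_iff₀ h2]
        have : (1 - z) * (x ^ 2) ≤ (1 - z) * (X * z) :=
          mul_le_mul_of_nonneg_left h (by linarith)
        nlinarith
      linarith
    · exact div_mul_cancel₀ _ h2.ne'
    · rw [div_mul_cancel₀ _ h2.ne']; ring

/-- Proposition EC.2 / Han–Gómez–Küçükyavuz equivalence: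
the Shor relaxation (EC.2) of logically constrained quadratic optimization
equals the optimal perspective relaxation (EC.4). -/
theorem stmt18 {n l : ℕ} (hn : 1 ≤ n) (k : ℕ)
    (Q : Matrix (Fin n) (Fin n) ℝ) (hQ : Q.PosSemidef)
    (c : Fin n → ℝ) (hc : ∀ i, 0 ≤ c i) (d : Fin n → ℝ)
    (A : Matrix (Fin l) (Fin n) ℝ) (b : Fin l → ℝ) :
    sInf {x : EReal | ∃ (z : Fin n → ℝ) (y : Fin n → ℝ)
        (W : Matrix (Fin n ⊕ Fin n) (Fin n ⊕ Fin n) ℝ),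
        (∀ i, z i ∈ Set.Icc (0 : ℝ) 1) ∧ (∑ i, z i) ≤ (k : ℝ) ∧
        (∀ i, A.mulVec y i ≤ b i) ∧
        W.IsSymm ∧
        (W - Matrix.vecMulVec (Sum.elim y z) (Sum.elim y z)).PosSemidef ∧
        (∀ i : Fin n, W (Sum.inr i) (Sum.inr i) = z i) ∧
        (∀ i : Fin n, W (Sum.inl i) (Sum.inr i) = y i) ∧
        x = ((∑ i, c i * z i
              + (1 / 2) * frob Q (Matrix.of fun i j : Fin n =>
                  W (Sum.inl i) (Sum.inl j))
              + ∑ i, d i * y i : ℝ) : EReal)} =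
      sInf {x : EReal | ∃ (z : Fin n → ℝ) (y : Fin n → ℝ)
        (X : Matrix (Fin n) (Fin n) ℝ),
        (∀ i, z i ∈ Set.Icc (0 : ℝ) 1) ∧ (∑ i, z i) ≤ (k : ℝ) ∧
        (∀ i, A.mulVec y i ≤ b i) ∧
        X.IsSymm ∧
        (X - Matrix.vecMulVec y y).PosSemidef ∧
        (∀ i : Fin n, (y i) ^ 2 ≤ X i i * z i) ∧
        x = ((∑ i, c i * z i + (1 / 2) * frob Q X
              + ∑ i, d i * y i : ℝ) : EReal)} := by
  congr 1
  ext v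
  constructor
  · rintro ⟨z, y, W, hz, hk, hA, hW, hP, h1, h2, rfl⟩
    refine ⟨z, y, _, hz, hk, hA, ?_, ?_, ?_, rfl⟩
    · ext i j
      exact hW.apply _ _
    · have := hP.submatrix (Sum.inl : Fin n → Fin n ⊕ Fin n)
      convert this using 1
      ext i j
      simp [Matrix.vecMulVec_apply]
    · intro i
      have hv : (Matrix.vecMulVec (Sum.elim y z) (Sum.elim y z)).PosSemidef := by
        simpa using Matrix.posSemidef_vecMulVec_self_star (Sum.elim y z)
      have hWp : W.PosSemidef := by simpa using hP.add hv
      have hd := (hWp.submatrix ![Sum.inl i, Sum.inr i]).det_nonneg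
      rw [Matrix.det_fin_two] at hd
      have h3 : W (Sum.inr i) (Sum.inl i) = y i := by rw [← h2 i]; exact hW.apply _ _
      simp [h1, h2, h3] at hd
      simp only [Matrix.of_apply]
      nlinarith
  · rintro ⟨z, y, X, hz, hk, hA, hX, hP, h1, rfl⟩
    have hex := fun i => aux_scalar (y i) (X i i) (z i) (hz i).1 (hz i).2
      (by simpa [Matrix.vecMulVec_apply] using hP.diag_nonneg (i := i)) (h1 i)
    choose β γ hγ hβ hβγ using hex
    have hW0 : (Matrix.diagonal (Sum.elim (fun _ => 1) β) *
        (X - Matrix.vecMulVec y y).submatrix (Sum.elim id id) (Sum.elim id id) *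
        Matrix.diagonal (Sum.elim (fun _ => 1) β) +
        Matrix.diagonal (Sum.elim (fun _ => 0) γ) :
          Matrix (Fin n ⊕ Fin n) (Fin n ⊕ Fin n) ℝ).PosSemidef := by
      refine Matrix.PosSemidef.add ?_ (Matrix.PosSemidef.diagonal ?_)
      · have := (hP.submatrix (Sum.elim id id : Fin n ⊕ Fin n → Fin n)).mul_mul_conjTranspose_same
          (Matrix.diagonal (Sum.elim (fun _ => 1) β))
        simpa [Matrix.diagonal_conjTranspose] using this
      · rintro (i | i)
        · simp
        · simpa using hγ i
    refine ⟨z, y, _ + Matrix.vecMulVec (Sum.elim y z) (Sum.elim y z), hz, hk, hA, ?_,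
      by rw [add_sub_cancel_right]; exact hW0, ?_, ?_, ?_⟩
    · refine Matrix.IsSymm.add (by
        have := hW0.1
        rwa [Matrix.IsHermitian, Matrix.conjTranspose_eq_transpose_of_trivial] at this) ?_
      ext i j
      simp [Matrix.vecMulVec_apply, mul_comm]
    · intro i
      have := hβγ i
      simp [Matrix.vecMulVec_apply]
      linarith
    · intro i
      have := hβ i
      simp [Matrix.vecMulVec_apply]
      linarith
    · congr 5
      ext i j
      simp [Matrix.vecMulVec_apply, Matrix.diagonal_apply]
end

section
/- Let n ≥ m ≥ 1, let u_1,…,u_m ∈ ℝ^n be orthonormal vectors, and let α ∈ [0,1]. For i ∈ [m] define w_i ∈ ℝ^{m+n} as the vector whose first m coordinates are zero and whose last n coordinates are u_i, let e_i ∈ ℝ^{m+n} be the i-th standard basis vector, let K_i := e_i w_i^⊤ + w_i e_i^⊤ ∈ S^{m+n}, and S := Σ_{i=1}^m K_i. Then the (m+n)²×(m+n)² matrix I_{(m+n)²} + α·(S ⊗ S) + (1−α)·Σ_{i=1}^m (K_i ⊗ K_i) is positive semidefinite, where ⊗ denotes the Kronecker product of matrices. -/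
open Matrix Kronecker

/-- The matrix `Kᵢ = eᵢ wᵢᵀ + wᵢ eᵢᵀ ∈ S^{m+n}`, where `eᵢ` is the `i`-th
standard basis vector of `ℝ^{m+n}` and `wᵢ` has first `m` coordinates zero and
last `n` coordinates `uᵢ`. -/
def Kmat {n m : ℕ} (u : Fin m → Fin n → ℝ) (i : Fin m) :
    Matrix (Fin (m + n)) (Fin (m + n)) ℝ :=
  Matrix.vecMulVec (Pi.single (Fin.castAdd n i) (1 : ℝ))
      (Fin.append (fun _ => (0 : ℝ)) (u i))
    + Matrix.vecMulVec (Fin.append (fun _ => (0 : ℝ)) (u i))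
        (Pi.single (Fin.castAdd n i) (1 : ℝ))

theorem aux_psd {ι : Type*} [Fintype ι] [DecidableEq ι] (T : Matrix ι ι ℝ)
    (hT : Tᵀ = T) (h3 : T * T * T = T) : (1 + T).PosSemidef := by
  have h1 : (1 - T * T)ᴴ = 1 - T * T := by
    simp [Matrix.conjTranspose_eq_transpose_of_trivial, hT]
  have h2 : (T + T * T)ᴴ = T + T * T := by
    simp [Matrix.conjTranspose_eq_transpose_of_trivial, hT]
  have a := Matrix.posSemidef_conjTranspose_mul_self (1 - T * T)
  have b := Matrix.posSemidef_conjTranspose_mul_self (T + T * T)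
  rw [h1] at a
  rw [h2] at b
  have c := a.add (b.smul (show (0 : ℝ) ≤ 1 / 2 by norm_num))
  have h4 : T * T * (T * T) = T * T := by rw [← mul_assoc, h3]
  have h3' : T * (T * T) = T := by rw [← mul_assoc, h3]
  have e1 : (1 - T * T) * (1 - T * T) = 1 - T * T := by
    simp only [sub_mul, mul_sub, one_mul, mul_one, h4]; abel
  have e2 : (T + T * T) * (T + T * T) = (2 : ℝ) • (T + T * T) := by
    simp only [add_mul, mul_add, h4, h3, h3', two_smul]; abel
  rw [e1, e2, smul_smul] at c
  norm_num at c
  convert c using 1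

theorem aux_sum {ι R : Type*} [Fintype ι] [DecidableEq ι] [Ring R] (A : ι → R)
    (h0 : ∀ i j, i ≠ j → A i * A j = 0) (h3 : ∀ i, A i * A i * A i = A i) :
    (∑ i, A i) * (∑ i, A i) * (∑ i, A i) = ∑ i, A i := by
  have h2 : (∑ i, A i) * (∑ i, A i) = ∑ i, A i * A i := by
    rw [Finset.sum_mul_sum]
    refine Finset.sum_congr rfl fun i _ => ?_
    exact Finset.sum_eq_single i (fun j _ hj => h0 i j hj.symm) (by simp)
  rw [h2, Finset.sum_mul_sum]
  refine Finset.sum_congr rfl fun i _ => ?_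
  rw [Finset.sum_eq_single i (fun j _ hj => by rw [mul_assoc, h0 i j hj.symm, mul_zero]) (by simp), h3]

section
variable {n m : ℕ} (u : Fin m → Fin n → ℝ)

theorem Kmat_tr (i : Fin m) : (Kmat u i)ᵀ = Kmat u i := by
  simp only [Kmat, transpose_add, transpose_vecMulVec]
  exact add_comm _ _

theorem aux_ww (i j : Fin m) :
    (Fin.append (fun _ : Fin m => (0 : ℝ)) (u i)) ⬝ᵥ (Fin.append (fun _ : Fin m => (0 : ℝ)) (u j))
      = ∑ p, u i p * u j p := by
  simp [dotProduct, Fin.sum_univ_add]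

theorem Kmat_mul (hu : ∀ i j, (∑ p, u i p * u j p) = if i = j then (1 : ℝ) else 0)
    (i j : Fin m) (h : i ≠ j) : Kmat u i * Kmat u j = 0 := by
  simp [Kmat, add_mul, mul_add, vecMulVec_mul_vecMulVec, aux_ww, hu, h, Pi.single_apply]

theorem Kmat_cube (hu : ∀ i j, (∑ p, u i p * u j p) = if i = j then (1 : ℝ) else 0)
    (i : Fin m) : Kmat u i * Kmat u i * Kmat u i = Kmat u i := by
  simp [Kmat, add_mul, mul_add, vecMulVec_mul_vecMulVec, aux_ww, hu]

end

/-- Lemma EC.3, partial redundancy of Kronecker constraints.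
For orthonormal `u₁,…,u_m ∈ ℝⁿ` and `α ∈ [0,1]`,
`I + α (S ⊗ S) + (1−α) Σᵢ (Kᵢ ⊗ Kᵢ) ⪰ 0`, where `S = Σᵢ Kᵢ`. -/
theorem stmt19 {n m : ℕ} (hm : 1 ≤ m) (hmn : m ≤ n)
    (u : Fin m → Fin n → ℝ)
    (hu : ∀ i j, (∑ p, u i p * u j p) = if i = j then (1 : ℝ) else 0)
    (α : ℝ) (hα : α ∈ Set.Icc (0 : ℝ) 1) :
    ((1 : Matrix (Fin (m + n) × Fin (m + n)) (Fin (m + n) × Fin (m + n)) ℝ)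
        + α • ((∑ i, Kmat u i) ⊗ₖ (∑ i, Kmat u i))
        + (1 - α) • ∑ i, (Kmat u i ⊗ₖ Kmat u i)).PosSemidef := by
  have hS := aux_sum (Kmat u) (Kmat_mul u hu) (Kmat_cube u hu)
  have hSt : (∑ i, Kmat u i)ᵀ = ∑ i, Kmat u i := by
    simp [transpose_sum, Kmat_tr]
  have hP := aux_sum (fun i => Kmat u i ⊗ₖ Kmat u i)
    (fun i j h => by simp [← mul_kronecker_mul, Kmat_mul u hu i j h])
    (fun i => by simp [← mul_kronecker_mul, Kmat_cube u hu i])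
  have a := aux_psd ((∑ i, Kmat u i) ⊗ₖ (∑ i, Kmat u i))
    (by rw [← kroneckerMap_transpose, hSt])
    (by rw [← mul_kronecker_mul, ← mul_kronecker_mul, hS])
  have b := aux_psd (∑ i, Kmat u i ⊗ₖ Kmat u i)
    (by simp [transpose_sum, ← kroneckerMap_transpose, Kmat_tr]) hP
  have c := (a.smul hα.1).add (b.smul (sub_nonneg.2 hα.2))
  convert c using 1
  module
end
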